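/- arXiv:2112.02055 — 4 statements merged into one kernel-verified Lean document; each statement's English description precedes it below -/
import Mathlib

section
/- Let 0 < α ≤ H < 1, let B^α be a d-dimensional fractional Brownian motion of Hurst index α, and let γ > 0 with γ ≠ Hd. There exists a constant C > 0 (depending only on d, H, α, γ) such that for all t ∈ (0,1]: E[ (max(t^H, ‖B^α(t)‖_∞))^{−γ/H} ] ≤ C t^{−γα/H} if γ < Hd, and E[ (max(t^H, ‖B^α(t)‖_∞))^{−γ/H} ] ≤ C t^{d(H−α)−γ} if γ > Hd. -/
open MeasureTheory ENNReal Set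

noncomputable section

/-- The `H`-parabolic rectangle `[a, a+δ] × ∏_{j=1}^d [b_j, b_j + δ^H]`. -/
def parRect (d : ℕ) (H : ℝ) (a : ℝ) (b : Fin d → ℝ) (δ : ℝ) : Set (ℝ × (Fin d → ℝ)) :=
  Set.Icc a (a + δ) ×ˢ Set.univ.pi fun j => Set.Icc (b j) (b j + δ ^ H)

/-- The `H`-parabolic `β`-dimensional Hausdorff content `Ψ_H^β(F)`:
the infimum of `Σ_j δ_j^β` over all countable covers of `F` by parabolic rectangles. -/
def parContent (d : ℕ) (H β : ℝ) (F : Set (ℝ × (Fin d → ℝ))) : ℝ≥0∞ :=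
  ⨅ (r : ℕ → ℝ × (Fin d → ℝ) × ℝ) (_ : ∀ n, 0 < (r n).2.2)
    (_ : F ⊆ ⋃ n, parRect d H (r n).1 (r n).2.1 (r n).2.2),
    ∑' n, ENNReal.ofReal ((r n).2.2 ^ β)

/-- The `H`-parabolic Hausdorff dimension `dim_{Ψ,H}(F) = inf {β : Ψ_H^β(F) = 0}`. -/
def parDim (d : ℕ) (H : ℝ) (F : Set (ℝ × (Fin d → ℝ))) : ℝ :=
  sInf {β : ℝ | 0 ≤ β ∧ parContent d H β F = 0}


/-- `B` is a `d`-dimensional fractional Brownian motion of Hurst index `H` under `P`: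
it is a centered Gaussian process (every finite linear functional of the process is a
centered Gaussian random variable) whose components are independent copies of the
real-valued fractional Brownian motion, i.e. with covariance
`E[Bᵢ(s) Bₖ(t)] = δ_{ik} · ½(|s|^{2H} + |t|^{2H} − |s−t|^{2H})`. -/
structure IsFBM {Ω : Type*} [MeasurableSpace Ω] (P : Measure Ω) (d : ℕ) (H : ℝ)
    (B : ℝ → Ω → Fin d → ℝ) : Prop where
  meas : ∀ t, Measurable (B t)
  gaussian : ∀ (n : ℕ) (t : Fin n → ℝ) (θ : Fin n → Fin d → ℝ),
    ∃ v : NNReal, P.map (fun ω => ∑ j, ∑ i, θ j i * B (t j) ω i) =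
      ProbabilityTheory.gaussianReal 0 v
  cov : ∀ (s t : ℝ) (i k : Fin d), ∫ ω, B s ω i * B t ω k ∂P =
    if i = k then (|s| ^ (2*H) + |t| ^ (2*H) - |s - t| ^ (2*H)) / 2 else 0

open ProbabilityTheory in
/-- The Gaussian law of `B t`. -/
lemma fbm_gaussian {Ω : Type*} [MeasurableSpace Ω] (P : Measure Ω)
    [IsProbabilityMeasure P] (d : ℕ) (α : ℝ)
    (B : ℝ → Ω → Fin d → ℝ) (hB : IsFBM P d α B) (t : ℝ) :
    HasGaussianLaw (fun ω i => B t ω i) P := by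
  refine ⟨isGaussian_of_map_eq_gaussianReal fun L => ?_⟩
  obtain ⟨v, hv⟩ := hB.gaussian 1 (fun _ => t) (fun _ i => L (Pi.single i 1))
  refine ⟨0, v, ?_⟩
  rw [Measure.map_map (by fun_prop) (hB.meas t), ← hv]
  congr 1
  ext ω
  simp only [Function.comp_apply, Finset.univ_unique, Finset.sum_const, Finset.card_singleton,
    one_smul]
  have h : B t ω = ∑ i, B t ω i • (Pi.single i (1:ℝ) : Fin d → ℝ) := by
    ext k
    simp [Finset.sum_apply, Pi.single_apply]
  conv_lhs => rw [h]
  rw [map_sum]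
  exact Finset.sum_congr rfl fun i _ => by rw [map_smul, smul_eq_mul, mul_comm]

open ProbabilityTheory in
lemma gaussian_small (v : NNReal) (s r : ℝ) (hs : 0 < s) (hv : (v : ℝ) = s ^ 2) (hr : 0 < r) :
    gaussianReal 0 v (Icc (-r) r) ≤ ENNReal.ofReal (r / s) := by
  have hv0 : v ≠ 0 := by
    rintro rfl
    have : 0 < s ^ 2 := by positivity
    simp at hv
    linarith [hv ▸ this]
  rw [gaussianReal_apply _ hv0]
  calc ∫⁻ x in Icc (-r) r, gaussianPDF 0 v x
      ≤ ∫⁻ x in Icc (-r) r, ENNReal.ofReal (1 / (2 * s)) := by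
        refine lintegral_mono fun x => ?_
        rw [gaussianPDF]
        refine ENNReal.ofReal_le_ofReal ?_
        rw [gaussianPDFReal, hv, one_div]
        have h1 : Real.exp (-(x - 0) ^ 2 / (2 * s ^ 2)) ≤ 1 := by
          rw [Real.exp_le_one_iff]
          have : 0 ≤ (x - 0) ^ 2 / (2 * s ^ 2) := by positivity
          rw [neg_div]; linarith
        have h2 : 2 * s ≤ √(2 * Real.pi * s ^ 2) := by
          apply Real.le_sqrt_of_sq_le
          nlinarith [Real.pi_gt_three, sq_nonneg s]
        calc _ ≤ (√(2 * Real.pi * s ^ 2))⁻¹ * 1 := by gcongr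
          _ ≤ (2 * s)⁻¹ := by rw [mul_one]; gcongr
    _ = ENNReal.ofReal (r / s) := by
        rw [setLIntegral_const, Real.volume_Icc, ← ENNReal.ofReal_mul (by positivity)]
        congr 1
        field_simp
        ring

open ProbabilityTheory in
lemma fbm_small {Ω : Type*} [MeasurableSpace Ω] (P : Measure Ω)
    [IsProbabilityMeasure P] (d : ℕ) (α : ℝ) (hα : 0 < α)
    (B : ℝ → Ω → Fin d → ℝ) (hB : IsFBM P d α B) (t : ℝ) (ht : 0 < t) (r : ℝ) (hr : 0 < r) :
    P {ω | ‖B t ω‖ ≤ r} ≤ ENNReal.ofReal ((r / t ^ α) ^ d) := by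
  have hG := fbm_gaussian P d α B hB t
  have hm : ∀ i, Measurable fun ω => B t ω i := fun i => (measurable_pi_apply i).comp (hB.meas t)
  have hGi : ∀ i, HasGaussianLaw (fun ω => B t ω i) P := fun i =>
    HasGaussianLaw.eval (X := fun i ω => B t ω i) hG i
  have hmean : ∀ i, ∫ ω, B t ω i ∂P = 0 := by
    intro i
    obtain ⟨v, hv⟩ := hB.gaussian 1 (fun _ => t) (fun _ k => if k = i then 1 else 0)
    simp only [ite_mul, one_mul, zero_mul, Finset.sum_ite_eq', Finset.mem_univ, if_true,
      Finset.univ_unique, Finset.sum_const, Finset.card_singleton, one_smul] at hv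
    have := integral_map (μ := P) (φ := fun ω => B t ω i) (hm i).aemeasurable
      (f := fun x : ℝ => x) (by fun_prop)
    rw [← this, hv, integral_id_gaussianReal]
  have hind : iIndepFun (fun i ω => B t ω i) P := by
    refine HasGaussianLaw.iIndepFun_of_covariance_eq_zero hG fun i j hij => ?_
    rw [covariance_eq_sub (hGi i).memLp_two (hGi j).memLp_two, hmean, zero_mul, sub_zero]
    simpa [hij] using hB.cov t t i j
  have hvar : ∀ i, Var[fun ω => B t ω i; P] = (t ^ α) ^ 2 := by
    intro i
    rw [variance_eq_sub (hGi i).memLp_two, hmean]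
    have := hB.cov t t i i
    simp only [if_true, sub_self, abs_zero, abs_of_pos ht] at this
    rw [Real.zero_rpow (by positivity)] at this
    simp only [Pi.pow_apply, pow_two, mul_zero, sub_zero]
    rw [this, ← Real.rpow_add ht]
    ring_nf
  have hset : {ω | ‖B t ω‖ ≤ r} = ⋂ i ∈ (Finset.univ : Finset (Fin d)),
      (fun ω => B t ω i) ⁻¹' (Icc (-r) r) := by
    ext ω
    simp [pi_norm_le_iff_of_nonneg hr.le, abs_le]
  rw [hset, hind.measure_inter_preimage_eq_mul Finset.univ (fun i _ => measurableSet_Icc)]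
  have hs : 0 < t ^ α := Real.rpow_pos_of_pos ht α
  calc ∏ i : Fin d, P ((fun ω => B t ω i) ⁻¹' (Icc (-r) r))
      ≤ ∏ i : Fin d, ENNReal.ofReal (r / t ^ α) := by
        refine Finset.prod_le_prod' fun i _ => ?_
        rw [← Measure.map_apply (hm i) measurableSet_Icc, (hGi i).map_eq_gaussianReal, hmean]
        refine gaussian_small _ _ _ hs ?_ hr
        rw [hvar, Real.coe_toNNReal _ (by positivity)]
    _ = _ := by
        rw [Finset.prod_const, Finset.card_univ, Fintype.card_fin, ENNReal.ofReal_pow (by positivity)]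

/-- Tail bound obtained from the small ball estimate. -/
lemma tail_bound {Ω : Type*} [MeasurableSpace Ω] (P : Measure Ω)
    (d : ℕ) (X : Ω → ℝ) (a s p : ℝ) (ha : 0 < a) (hs : 0 < s) (hp : 0 < p)
    (hsm : ∀ r : ℝ, 0 < r → P {ω | X ω ≤ r} ≤ ENNReal.ofReal ((r / s) ^ d))
    (u : ℝ) (hu : 0 < u) :
    P {ω | u < (max a (X ω)) ^ (-p)} ≤ ENNReal.ofReal (s ^ (-(d:ℝ)) * u ^ (-(d / p))) := by
  have hr : 0 < u ^ (-(1 / p)) := Real.rpow_pos_of_pos hu _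
  refine (measure_mono ?_).trans ((hsm _ hr).trans (le_of_eq ?_))
  · intro ω hω
    simp only [mem_setOf_eq] at hω ⊢
    have hY : 0 < max a (X ω) := lt_max_of_lt_left ha
    have h := Real.rpow_lt_rpow_of_neg hu hω (z := -(1 / p)) (by
      have : 0 < 1 / p := by positivity
      linarith)
    rw [← Real.rpow_mul hY.le] at h
    have e : -p * -(1 / p) = 1 := by field_simp
    rw [e, Real.rpow_one] at h
    exact (le_max_right _ _).trans h.le
  · congr 1
    rw [div_pow, ← Real.rpow_natCast, ← Real.rpow_natCast s, ← Real.rpow_mul hu.le,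
      Real.rpow_neg hs.le, div_eq_inv_mul]
    congr 2
    field_simp

lemma kernel_case_one {Ω : Type*} [MeasurableSpace Ω] (P : Measure Ω) [IsProbabilityMeasure P]
    (d : ℕ) (X : Ω → ℝ) (hX : Measurable X) (a s p : ℝ) (ha : 0 < a) (hs : 0 < s) (hp : 0 < p)
    (hsm : ∀ r : ℝ, 0 < r → P {ω | X ω ≤ r} ≤ ENNReal.ofReal ((r / s) ^ d)) (hpd : p < d) :
    ∫⁻ ω, ENNReal.ofReal ((max a (X ω)) ^ (-p)) ∂P ≤
      ENNReal.ofReal ((1 + 1 / (d / p - 1)) * s ^ (-p)) := by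
  have hq : 1 < d / p := by rwa [one_lt_div hp]
  have hS : 0 < s ^ (-p) := Real.rpow_pos_of_pos hs _
  rw [lintegral_eq_lintegral_meas_lt P (Filter.Eventually.of_forall fun ω => by
    have : 0 < max a (X ω) := lt_max_of_lt_left ha
    positivity) (by fun_prop), ← Ioc_union_Ioi_eq_Ioi hS.le]
  refine (lintegral_union_le _ _ _).trans ?_
  have h1 : ∫⁻ u in Ioc 0 (s ^ (-p)), P {ω | u < (max a (X ω)) ^ (-p)} ≤
      ENNReal.ofReal (s ^ (-p)) := by
    calc _ ≤ ∫⁻ u in Ioc 0 (s ^ (-p)), 1 := lintegral_mono fun u => prob_le_one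
      _ = _ := by simp
  have h2 : ∫⁻ u in Ioi (s ^ (-p)), P {ω | u < (max a (X ω)) ^ (-p)} ≤
      ENNReal.ofReal (1 / (d / p - 1) * s ^ (-p)) := by
    calc _ ≤ ∫⁻ u in Ioi (s ^ (-p)), ENNReal.ofReal (s ^ (-(d:ℝ)) * u ^ (-(d / p))) :=
          setLIntegral_mono' measurableSet_Ioi fun u hu =>
            tail_bound P d X a s p ha hs hp hsm u (hS.trans hu)
      _ = _ := by
        rw [← ofReal_integral_eq_lintegral_ofReal]
        · rw [integral_const_mul, integral_Ioi_rpow_of_lt (by linarith) hS]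
          congr 1
          rw [← Real.rpow_mul hs.le, neg_div, ← div_neg, mul_div_assoc', ← Real.rpow_add hs,
            one_div_mul_eq_div]
          congr 2
          · field_simp
            ring
          · ring
        · exact (integrableOn_Ioi_rpow_of_lt (by linarith) hS).const_mul _
        · refine (ae_restrict_mem measurableSet_Ioi).mono fun u hu => ?_
          have : 0 < u := hS.trans hu
          simp only [Pi.zero_apply]
          positivity
  refine (add_le_add h1 h2).trans (le_of_eq ?_)
  have : 0 < d / p - 1 := by linarith
  rw [← ENNReal.ofReal_add (by positivity) (by positivity)]
  congr 1
  ring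

lemma kernel_case_two {Ω : Type*} [MeasurableSpace Ω] (P : Measure Ω) [IsProbabilityMeasure P]
    (d : ℕ) (X : Ω → ℝ) (hX : Measurable X) (a s p : ℝ) (ha : 0 < a) (hs : 0 < s) (hp : 0 < p)
    (hsm : ∀ r : ℝ, 0 < r → P {ω | X ω ≤ r} ≤ ENNReal.ofReal ((r / s) ^ d)) (hpd : d < p) :
    ∫⁻ ω, ENNReal.ofReal ((max a (X ω)) ^ (-p)) ∂P ≤
      ENNReal.ofReal (1 / (1 - d / p) * (s ^ (-(d:ℝ)) * a ^ (d - p))) := by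
  have hq : d / p < 1 := by rwa [div_lt_one hp]
  have hS : 0 < a ^ (-p) := Real.rpow_pos_of_pos ha _
  rw [lintegral_eq_lintegral_meas_lt P (Filter.Eventually.of_forall fun ω => by
    have : 0 < max a (X ω) := lt_max_of_lt_left ha
    positivity) (by fun_prop), ← Ioc_union_Ioi_eq_Ioi hS.le]
  refine (lintegral_union_le _ _ _).trans ?_
  have h2 : ∫⁻ u in Ioi (a ^ (-p)), P {ω | u < (max a (X ω)) ^ (-p)} = 0 := by
    rw [setLIntegral_congr_fun (g := fun _ => 0) measurableSet_Ioi]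
    · simp
    · intro u hu
      convert measure_empty (μ := P)
      ext ω
      simp only [mem_setOf_eq, mem_empty_iff_false, iff_false, not_lt]
      exact (Real.rpow_le_rpow_of_nonpos ha (le_max_left _ _) (by linarith)).trans (le_of_lt hu)
  have h1 : ∫⁻ u in Ioc 0 (a ^ (-p)), P {ω | u < (max a (X ω)) ^ (-p)} ≤
      ENNReal.ofReal (1 / (1 - d / p) * (s ^ (-(d:ℝ)) * a ^ (d - p))) := by
    calc _ ≤ ∫⁻ u in Ioc 0 (a ^ (-p)), ENNReal.ofReal (s ^ (-(d:ℝ)) * u ^ (-(d / p))) :=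
          setLIntegral_mono' measurableSet_Ioc fun u hu =>
            tail_bound P d X a s p ha hs hp hsm u hu.1
      _ = _ := by
        rw [← ofReal_integral_eq_lintegral_ofReal]
        · rw [integral_const_mul, ← intervalIntegral.integral_of_le hS.le,
            integral_rpow (Or.inl (by linarith)), Real.zero_rpow (by linarith), sub_zero,
            ← Real.rpow_mul ha.le]
          congr 1
          have e : -p * (-(d / p) + 1) = d - p := by
            field_simp
            ring
          rw [e, one_div_mul_eq_div, mul_div_assoc']
          congr 1
          ring
        · have := (intervalIntegral.intervalIntegrable_rpow' (a := 0) (b := a ^ (-p))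
            (r := -(d / p)) (by linarith)).const_mul (s ^ (-(d:ℝ)))
          exact (intervalIntegrable_iff_integrableOn_Ioc_of_le hS.le).1 this
        · refine (ae_restrict_mem measurableSet_Ioc).mono fun u hu => ?_
          have : 0 < u := hu.1
          simp only [Pi.zero_apply]
          positivity
  rw [h2, add_zero]
  exact h1

/-- Estimate for `E[(max(t^H, ‖B^α(t)‖_∞))^{-γ/H}]`, `t ∈ (0,1]`: there is a constant
`C > 0` (depending only on `d`, `H`, `α`, `γ`) such that the expectation is at most
`C t^{-γα/H}` when `γ < Hd`, and at most `C t^{d(H-α)-γ}` when `γ > Hd`.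
(The norm on `Fin d → ℝ` is the maximum norm.) -/
theorem fbm_kernel_estimate {Ω : Type*} [MeasurableSpace Ω] (P : Measure Ω)
    [IsProbabilityMeasure P] (d : ℕ) (α H γ : ℝ)
    (hα : 0 < α) (hαH : α ≤ H) (hH : H < 1) (hγ : 0 < γ)
    (B : ℝ → Ω → Fin d → ℝ) (hB : IsFBM P d α B) :
    ∃ C : ℝ, 0 < C ∧ ∀ t ∈ Set.Ioc (0:ℝ) 1,
      (γ < H * d →
        ∫⁻ ω, ENNReal.ofReal ((max (t ^ H) ‖B t ω‖) ^ (-(γ / H))) ∂P ≤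
          ENNReal.ofReal (C * t ^ (-(γ * α / H)))) ∧
      (H * d < γ →
        ∫⁻ ω, ENNReal.ofReal ((max (t ^ H) ‖B t ω‖) ^ (-(γ / H))) ∂P ≤
          ENNReal.ofReal (C * t ^ (d * (H - α) - γ))) := by
  set p : ℝ := γ / H with hpdef
  have hH0 : 0 < H := lt_of_lt_of_le hα hαH
  have hp : 0 < p := div_pos hγ hH0
  refine ⟨1 + |1 / (d / p - 1)|, by positivity, fun t ht => ?_⟩
  have ha : 0 < t ^ H := Real.rpow_pos_of_pos ht.1 _
  have hs : 0 < t ^ α := Real.rpow_pos_of_pos ht.1 _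
  have hX : Measurable fun ω => ‖B t ω‖ := (hB.meas t).norm
  have hsm := fbm_small P d α hα B hB t ht.1
  constructor
  · intro h
    have hpd : p < d := by
      rw [hpdef, div_lt_iff₀ hH0]
      linarith
    refine (kernel_case_one P d _ hX _ _ p ha hs hp hsm hpd).trans (ENNReal.ofReal_le_ofReal ?_)
    have e : t ^ (-(γ * α / H)) = (t ^ α) ^ (-p) := by
      rw [← Real.rpow_mul ht.1.le, hpdef]
      congr 1
      ring
    rw [e]
    gcongr
    exact le_abs_self _
  · intro h
    have hpd : d < p := by
      rw [hpdef, lt_div_iff₀ hH0]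
      linarith
    refine (kernel_case_two P d _ hX _ _ p ha hs hp hsm hpd).trans (ENNReal.ofReal_le_ofReal ?_)
    have e : t ^ (d * (H - α) - γ) = (t ^ α) ^ (-(d:ℝ)) * (t ^ H) ^ (d - p) := by
      rw [← Real.rpow_mul ht.1.le, ← Real.rpow_mul ht.1.le, ← Real.rpow_add ht.1, hpdef]
      congr 1
      field_simp
      ring
    rw [e]
    gcongr
    have : 1 / (1 - d / p) = -(1 / (d / p - 1)) := by
      rw [← neg_sub (d / p) 1, div_neg]
    rw [this]
    exact (neg_le_abs _).trans (by linarith)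
end
end

section
/- Let Y = (Y(t))_{t∈[0,1]} be a jointly measurable ℝ^d-valued stochastic process on a probability space (Ω,𝓕,P) and let ν be a finite positive Borel measure on [0,1]. Then the following are equivalent: (1) almost surely the occupation measure ν_Y is absolutely continuous with respect to Lebesgue measure λ_d on ℝ^d, and its density dν_Y/dλ_d belongs to L²(λ_d ⊗ P); (2) liminf_{r↓0} r^{−d} ∬_{[0,1]×[0,1]} P(‖Y(s) − Y(t)‖ < r) dν(s) dν(t) < ∞. -/
open MeasureTheory ENNReal Set Filter

noncomputable section

/-- The occupation measure of a process `Y` for a fixed sample point `ω`: the image under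
`t ↦ Y(t)(ω)` of the measure `ν` on `[0,1]`, i.e. `ν_Y(E) = ν{t ∈ [0,1] : Y(t) ∈ E}`. -/
def occupationMeasure {Ω : Type*} [MeasurableSpace Ω] {d : ℕ}
    (Y : ℝ → Ω → EuclideanSpace ℝ (Fin d)) (ν : Measure ℝ) (ω : Ω) :
    Measure (EuclideanSpace ℝ (Fin d)) :=
  ν.map fun t => Y t ω

open scoped Topology

/-- The energy `∫ μ(B(x,r)) dμ(x)` of a measure at scale `r`. -/
def ballEnergy {E : Type*} [PseudoMetricSpace E] [MeasurableSpace E] (μ : Measure E) (r : ℝ) :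
    ℝ≥0∞ := ∫⁻ x, μ (Metric.ball x r) ∂μ

lemma measurable_measure_ball_aux {d : ℕ} (μ : Measure (EuclideanSpace ℝ (Fin d)))
    [IsFiniteMeasure μ] (r : ℝ) : Measurable fun x => μ (Metric.ball x r) := by
  have h : MeasurableSet {p : EuclideanSpace ℝ (Fin d) × EuclideanSpace ℝ (Fin d) |
      dist p.2 p.1 < r} :=
    measurableSet_lt (by fun_prop) measurable_const
  exact measurable_measure_prodMk_left h

/-- Upper bound for the energy in terms of the density. -/
lemma ballEnergy_le {d : ℕ} (μ : Measure (EuclideanSpace ℝ (Fin d))) [IsFiniteMeasure μ]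
    (hμ : μ ≪ volume) (r : ℝ) (hr : 0 < r) :
    ENNReal.ofReal r ^ (-(d : ℝ)) * ballEnergy μ r ≤
      (2 * volume (Metric.ball (0 : EuclideanSpace ℝ (Fin d)) 1)) *
        ∫⁻ x, (μ.rnDeriv volume x) ^ 2 ∂volume := by
  set f := μ.rnDeriv volume with hf
  have hfm : Measurable f := Measure.measurable_rnDeriv _ _
  have hμf : μ = volume.withDensity f := (Measure.withDensity_rnDeriv_eq _ _ hμ).symm
  set κ := volume (Metric.ball (0 : EuclideanSpace ℝ (Fin d)) 1)
  have hvol : ∀ x : EuclideanSpace ℝ (Fin d),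
      volume (Metric.ball x r) = ENNReal.ofReal r ^ (d : ℝ) * κ := by
    intro x
    rw [Measure.addHaar_ball_of_pos _ _ hr]
    simp [ENNReal.ofReal_pow hr.le, κ]
  let k : EuclideanSpace ℝ (Fin d) → EuclideanSpace ℝ (Fin d) → ℝ≥0∞ :=
    fun x y => (Metric.ball x r).indicator (fun _ => 1) y
  have hkm : Measurable fun p : EuclideanSpace ℝ (Fin d) × EuclideanSpace ℝ (Fin d) =>
      k p.1 p.2 := by
    have h : MeasurableSet {p : EuclideanSpace ℝ (Fin d) × EuclideanSpace ℝ (Fin d) |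
      dist p.2 p.1 < r} :=
      measurableSet_lt (by fun_prop) measurable_const
    exact (measurable_const (a := (1 : ℝ≥0∞))).indicator h
  have hsymm : ∀ x y, k x y = k y x := by
    intro x y
    simp only [k, indicator, Metric.mem_ball, dist_comm]
  have hkx : ∀ x, ∫⁻ y, k x y = ENNReal.ofReal r ^ (d : ℝ) * κ := by
    intro x
    rw [← hvol x]
    exact lintegral_indicator_one measurableSet_ball
  have hkmx : ∀ x, Measurable fun y => k x y := fun x => by fun_prop
  have h1 : ballEnergy μ r = ∫⁻ x, ∫⁻ y, f x * (f y * k x y) := by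
    have hb : ∀ x, μ (Metric.ball x r) = ∫⁻ y, f y * k x y := by
      intro x
      conv_lhs => rw [hμf, withDensity_apply _ measurableSet_ball,
        ← lintegral_indicator measurableSet_ball]
      refine lintegral_congr fun y => ?_
      by_cases h : y ∈ Metric.ball x r <;> simp [k, h]
    unfold ballEnergy
    have hbm := measurable_measure_ball_aux μ r
    calc ∫⁻ x, μ (Metric.ball x r) ∂μ
        = ∫⁻ x, μ (Metric.ball x r) ∂(volume.withDensity f) := by rw [← hμf]
      _ = ∫⁻ x, f x * μ (Metric.ball x r) := by
          rw [lintegral_withDensity_eq_lintegral_mul _ hfm hbm]; rfl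
      _ = _ := by
          refine lintegral_congr fun x => ?_
          rw [hb, lintegral_const_mul _ (by fun_prop)]
  have h2 : ballEnergy μ r ≤ 2 * (ENNReal.ofReal r ^ (d : ℝ) * κ) * ∫⁻ x, f x ^ 2 := by
    rw [h1]
    calc ∫⁻ x, ∫⁻ y, f x * (f y * k x y)
        ≤ ∫⁻ x, ∫⁻ y, (f x ^ 2 * k x y + f y ^ 2 * k x y) := by
          refine lintegral_mono fun x => lintegral_mono fun y => ?_
          simp only
          rw [← mul_assoc, ← add_mul]
          gcongr
          rcases le_total (f x) (f y) with h | h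
          · calc f x * f y ≤ f y * f y := by gcongr
              _ ≤ _ := by rw [← sq]; exact le_add_self
          · calc f x * f y ≤ f x * f x := by gcongr
              _ ≤ _ := by rw [← sq]; exact le_self_add
      _ = (∫⁻ x, ∫⁻ y, f x ^ 2 * k x y) + ∫⁻ x, ∫⁻ y, f y ^ 2 * k x y := by
          rw [← lintegral_add_left]
          · refine lintegral_congr fun x => ?_
            rw [lintegral_add_left (by fun_prop)]
          · apply Measurable.lintegral_prod_right'
              (f := fun p : EuclideanSpace ℝ (Fin d) × EuclideanSpace ℝ (Fin d) =>
                f p.1 ^ 2 * k p.1 p.2)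
            fun_prop
      _ = (∫⁻ x, ∫⁻ y, f x ^ 2 * k x y) + ∫⁻ y, ∫⁻ x, f y ^ 2 * k x y := by
          congr 1
          apply lintegral_lintegral_swap
          apply Measurable.aemeasurable
          change Measurable fun p : EuclideanSpace ℝ (Fin d) × EuclideanSpace ℝ (Fin d) =>
                f p.2 ^ 2 * k p.1 p.2
          fun_prop
      _ = (∫⁻ x, ∫⁻ y, f x ^ 2 * k x y) + ∫⁻ x, ∫⁻ y, f x ^ 2 * k x y := by
          congr 1
          refine lintegral_congr fun x => lintegral_congr fun y => ?_
          rw [hsymm]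
      _ = _ := by
          have : ∫⁻ x, ∫⁻ y, f x ^ 2 * k x y =
              (ENNReal.ofReal r ^ (d : ℝ) * κ) * ∫⁻ x, f x ^ 2 := by
            rw [← lintegral_const_mul _ (by fun_prop)]
            refine lintegral_congr fun x => ?_
            rw [lintegral_const_mul _ (by fun_prop), hkx, mul_comm]
          rw [this]
          ring
  have h0 : ENNReal.ofReal r ≠ 0 := by simpa using hr
  calc ENNReal.ofReal r ^ (-(d : ℝ)) * ballEnergy μ r
      ≤ ENNReal.ofReal r ^ (-(d : ℝ)) *
        (2 * (ENNReal.ofReal r ^ (d : ℝ) * κ) * ∫⁻ x, f x ^ 2) := by gcongr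
    _ = (ENNReal.ofReal r ^ (-(d : ℝ)) * ENNReal.ofReal r ^ (d : ℝ)) *
        (2 * κ * ∫⁻ x, f x ^ 2) := by ring
    _ = _ := by
        rw [← ENNReal.rpow_add _ _ h0 ofReal_ne_top]
        simp

/-- The constant relating ball ratios and scaled energies. -/
def ratioConst (d : ℕ) : ℝ≥0∞ :=
  (2 : ℝ≥0∞) ^ (d : ℝ) * (volume (Metric.ball (0 : EuclideanSpace ℝ (Fin d)) 1))⁻¹

lemma ratioConst_ne_top (d : ℕ) : ratioConst d ≠ ⊤ := by
  unfold ratioConst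
  refine ENNReal.mul_ne_top (by simp) ?_
  rw [ENNReal.inv_ne_top]
  exact (Metric.measure_ball_pos _ _ one_pos).ne'

lemma ratio_le {d : ℕ} (μ : Measure (EuclideanSpace ℝ (Fin d)))
    (x : EuclideanSpace ℝ (Fin d)) (r : ℝ) (hr : 0 < r) :
    μ (Metric.closedBall x (r / 2)) / volume (Metric.closedBall x (r / 2)) ≤
      ratioConst d * (ENNReal.ofReal r ^ (-(d : ℝ)) * μ (Metric.ball x r)) := by
  have hvol : volume (Metric.closedBall x (r / 2)) =
      (ENNReal.ofReal r / 2) ^ (d : ℝ) *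
        volume (Metric.ball (0 : EuclideanSpace ℝ (Fin d)) 1) := by
    rw [Measure.addHaar_closedBall _ _ (by positivity)]
    simp [ENNReal.ofReal_pow (show 0 ≤ r / 2 by positivity), ENNReal.ofReal_div_of_pos]
  have h0 : ENNReal.ofReal r ≠ 0 := by simpa using hr
  have hκ0 : volume (Metric.ball (0 : EuclideanSpace ℝ (Fin d)) 1) ≠ 0 :=
    (Metric.measure_ball_pos _ _ one_pos).ne'
  rw [hvol, ENNReal.div_eq_inv_mul, ENNReal.mul_inv (Or.inr (measure_ball_lt_top).ne)
    (Or.inr hκ0), ← ENNReal.inv_rpow, ENNReal.inv_div (by simp) (by simp),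
    ENNReal.div_rpow_of_nonneg _ _ (by positivity), ENNReal.rpow_neg, ratioConst]
  have hsub : Metric.closedBall x (r / 2) ⊆ Metric.ball x r :=
    Metric.closedBall_subset_ball (by linarith)
  calc _ ≤ 2 ^ (d : ℝ) / ENNReal.ofReal r ^ (d : ℝ) *
        (volume (Metric.ball (0 : EuclideanSpace ℝ (Fin d)) 1))⁻¹ * μ (Metric.ball x r) := by
        gcongr
    _ = _ := by rw [div_eq_mul_inv]; ring

lemma ac_and_lintegral_le {d : ℕ} (μ : Measure (EuclideanSpace ℝ (Fin d))) [IsFiniteMeasure μ]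
    (r : ℕ → ℝ) (hr : Tendsto r atTop (𝓝[>] 0)) (hr0 : ∀ n, 0 < r n)
    (hL : liminf (fun n => ENNReal.ofReal (r n) ^ (-(d : ℝ)) * ballEnergy μ (r n)) atTop < ⊤) :
    μ ≪ volume ∧ ∫⁻ x, (μ.rnDeriv volume x) ^ 2 ∂volume ≤
      ratioConst d *
        liminf (fun n => ENNReal.ofReal (r n) ^ (-(d : ℝ)) * ballEnergy μ (r n)) atTop := by
  set L := liminf (fun n => ENNReal.ofReal (r n) ^ (-(d : ℝ)) * ballEnergy μ (r n)) atTop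
  let D : EuclideanSpace ℝ (Fin d) → ℝ≥0∞ := fun x =>
    liminf (fun n => ENNReal.ofReal (r n) ^ (-(d : ℝ)) * μ (Metric.ball x (r n))) atTop
  have hmeas : ∀ n, Measurable fun x =>
      ENNReal.ofReal (r n) ^ (-(d : ℝ)) * μ (Metric.ball x (r n)) :=
    fun n => (measurable_measure_ball_aux μ (r n)).const_mul _
  have hDm : Measurable D := Measurable.liminf hmeas
  have hDL : ∫⁻ x, D x ∂μ ≤ L := by
    refine (lintegral_liminf_le hmeas).trans (le_of_eq ?_)
    congr 1
    funext n
    rw [lintegral_const_mul _ (measurable_measure_ball_aux μ (r n))]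
    rfl
  have hDfin : ∀ᵐ x ∂μ, D x < ⊤ := ae_lt_top hDm (hDL.trans_lt hL).ne
  have hr2 : Tendsto (fun n => r n / 2) atTop (𝓝[>] 0) := by
    rw [tendsto_nhdsWithin_iff] at hr ⊢
    refine ⟨by simpa using hr.1.div_const 2, Eventually.of_forall fun n => ?_⟩
    have := hr0 n
    simp only [mem_Ioi]; positivity
  -- the lower limit of the ratios
  have hratio : ∀ x, liminf (fun n => μ (Metric.closedBall x (r n / 2)) /
      volume (Metric.closedBall x (r n / 2))) atTop ≤ ratioConst d * D x := by
    intro x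
    have h := ENNReal.liminf_const_mul_of_ne_top (f := atTop)
      (u := fun n => ENNReal.ofReal (r n) ^ (-(d : ℝ)) * μ (Metric.ball x (r n)))
      (ratioConst_ne_top d)
    rw [← h]
    exact liminf_le_liminf (Eventually.of_forall fun n => ratio_le μ x (r n) (hr0 n))
  have hac : μ ≪ volume := by
    have hB := Besicovitch.ae_tendsto_rnDeriv (volume : Measure (EuclideanSpace ℝ (Fin d))) μ
    have hpos : ∀ᵐ x ∂μ, (volume : Measure (EuclideanSpace ℝ (Fin d))).rnDeriv μ x ≠ 0 := by
      filter_upwards [hB, hDfin] with x hx hDx h0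
      rw [h0] at hx
      have h1 := (tendsto_inv_iff.2 (hx.comp hr2))
      have h2 : (fun n => μ (Metric.closedBall x (r n / 2)) /
          volume (Metric.closedBall x (r n / 2))) =
          fun n => (((fun r => volume (Metric.closedBall x r) / μ (Metric.closedBall x r)) ∘
            fun n => r n / 2) n)⁻¹ := by
        funext n
        have := hr0 n
        simp only [Function.comp]
        rw [ENNReal.inv_div (Or.inl (measure_ne_top _ _))]
        exact Or.inr (Metric.measure_closedBall_pos _ _ (by positivity)).ne'
      have h3 := hratio x
      rw [h2, h1.liminf_eq] at h3
      simp only [ENNReal.inv_zero, top_le_iff] at h3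
      exact ENNReal.mul_ne_top (ratioConst_ne_top d) hDx.ne h3
    refine (withDensity_absolutelyContinuous' (Measure.measurable_rnDeriv _ _).aemeasurable
      hpos).trans ?_
    exact (Measure.withDensity_rnDeriv_le _ _).absolutelyContinuous
  refine ⟨hac, ?_⟩
  have hB := hac.ae_le (Besicovitch.ae_tendsto_rnDeriv μ
    (volume : Measure (EuclideanSpace ℝ (Fin d))))
  calc ∫⁻ x, (μ.rnDeriv volume x) ^ 2 ∂volume
      = ∫⁻ x, μ.rnDeriv volume x ∂μ := by
        rw [← lintegral_rnDeriv_mul hac (Measure.measurable_rnDeriv _ _).aemeasurable]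
        simp only [sq]
    _ ≤ ∫⁻ x, ratioConst d * D x ∂μ := by
        refine lintegral_mono_ae ?_
        filter_upwards [hB] with x hx
        rw [← (hx.comp hr2).liminf_eq]
        exact hratio x
    _ = ratioConst d * ∫⁻ x, D x ∂μ := lintegral_const_mul _ hDm
    _ ≤ _ := by gcongr

/-- The energy of the occupation measure is a product measure. -/
lemma ballEnergy_map {d : ℕ} (ν : Measure ℝ) [IsFiniteMeasure ν]
    (y : ℝ → EuclideanSpace ℝ (Fin d)) (hy : Measurable y) (r : ℝ) :
    ballEnergy (ν.map y) r = (ν.prod ν) {p | ‖y p.1 - y p.2‖ < r} := by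
  have hs : MeasurableSet {p : ℝ × ℝ | ‖y p.1 - y p.2‖ < r} :=
    measurableSet_lt (by fun_prop) measurable_const
  rw [Measure.prod_apply hs, ballEnergy, lintegral_map (measurable_measure_ball_aux _ r) hy]
  refine lintegral_congr fun s => ?_
  rw [Measure.map_apply hy measurableSet_ball]
  congr 1
  ext t
  simp [dist_eq_norm, norm_sub_rev]

lemma energy_measurable_and_eq {Ω : Type*} [MeasurableSpace Ω] (P : Measure Ω)
    [IsProbabilityMeasure P] (d : ℕ) (Y : ℝ → Ω → EuclideanSpace ℝ (Fin d))
    (hY : Measurable fun p : ℝ × Ω => Y p.1 p.2)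
    (ν : Measure ℝ) [IsFiniteMeasure ν] (r : ℝ) :
    (Measurable fun ω => ballEnergy (occupationMeasure Y ν ω) r) ∧
    ∫⁻ s, ∫⁻ t, P {ω | ‖Y s ω - Y t ω‖ < r} ∂ν ∂ν =
      ∫⁻ ω, ballEnergy (occupationMeasure Y ν ω) r ∂P := by
  have hYω : ∀ ω, Measurable fun t => Y t ω := fun ω => hY.comp measurable_prodMk_right
  have hA : MeasurableSet {q : (ℝ × ℝ) × Ω | ‖Y q.1.1 q.2 - Y q.1.2 q.2‖ < r} := by
    have h1 : Measurable fun q : (ℝ × ℝ) × Ω => Y q.1.1 q.2 :=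
      hY.comp (measurable_fst.fst.prodMk measurable_snd)
    have h2 : Measurable fun q : (ℝ × ℝ) × Ω => Y q.1.2 q.2 :=
      hY.comp (measurable_fst.snd.prodMk measurable_snd)
    exact measurableSet_lt (h1.sub h2).norm measurable_const
  have he : ∀ ω, ballEnergy (occupationMeasure Y ν ω) r =
      (ν.prod ν) ((fun p => (p, ω)) ⁻¹'
        {q : (ℝ × ℝ) × Ω | ‖Y q.1.1 q.2 - Y q.1.2 q.2‖ < r}) := by
    intro ω
    rw [occupationMeasure, ballEnergy_map ν _ (hYω ω)]
    rfl
  simp_rw [he]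
  refine ⟨measurable_measure_prodMk_right hA, ?_⟩
  rw [← Measure.prod_apply_symm hA, Measure.prod_apply hA,
    lintegral_prod _ (measurable_measure_prodMk_left hA).aemeasurable]
  rfl

/-- Let `Y` be a jointly measurable `ℝ^d`-valued process on `[0,1]` and `ν` a finite Borel
measure on `[0,1]`. The following are equivalent:
(1) almost surely the occupation measure `ν_Y` is absolutely continuous with respect to
Lebesgue measure `λ_d`, with density `dν_Y/dλ_d ∈ L²(λ_d ⊗ P)`;
(2) `liminf_{r↓0} r^{-d} ∬ P(‖Y(s)−Y(t)‖ < r) dν(s) dν(t) < ∞`. -/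
theorem occupation_density_L2_iff {Ω : Type*} [MeasurableSpace Ω] (P : Measure Ω)
    [IsProbabilityMeasure P] (d : ℕ) (Y : ℝ → Ω → EuclideanSpace ℝ (Fin d))
    (hY : Measurable fun p : ℝ × Ω => Y p.1 p.2)
    (ν : Measure ℝ) [IsFiniteMeasure ν] (hν : ν (Set.Icc 0 1)ᶜ = 0) :
    ((∀ᵐ ω ∂P, occupationMeasure Y ν ω ≪ volume) ∧
      ∫⁻ ω, ∫⁻ x, ((occupationMeasure Y ν ω).rnDeriv volume x) ^ 2 ∂volume ∂P < ⊤) ↔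
    Filter.liminf
      (fun r : ℝ => ENNReal.ofReal r ^ (-(d : ℝ)) *
        ∫⁻ s, ∫⁻ t, P {ω | ‖Y s ω - Y t ω‖ < r} ∂ν ∂ν)
      (nhdsWithin 0 (Set.Ioi 0)) < ⊤ := by
  have hYω : ∀ ω, Measurable fun t => Y t ω := fun ω => hY.comp measurable_prodMk_right
  have hfin : ∀ ω, IsFiniteMeasure (occupationMeasure Y ν ω) := fun ω => by
    unfold occupationMeasure; infer_instance
  have hEm := fun r => (energy_measurable_and_eq P d Y hY ν r).1
  have hF : ∀ r : ℝ, ENNReal.ofReal r ^ (-(d : ℝ)) *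
        ∫⁻ s, ∫⁻ t, P {ω | ‖Y s ω - Y t ω‖ < r} ∂ν ∂ν =
      ∫⁻ ω, ENNReal.ofReal r ^ (-(d : ℝ)) * ballEnergy (occupationMeasure Y ν ω) r ∂P := by
    intro r
    rw [(energy_measurable_and_eq P d Y hY ν r).2, lintegral_const_mul _ (hEm r)]
  simp_rw [hF]
  constructor
  · rintro ⟨hac, hint⟩
    set C := 2 * volume (Metric.ball (0 : EuclideanSpace ℝ (Fin d)) 1) with hC
    have hCtop : C ≠ ⊤ := ENNReal.mul_ne_top (by simp) measure_ball_lt_top.ne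
    refine lt_of_le_of_lt ?_ (ENNReal.mul_lt_top hCtop.lt_top hint)
    refine liminf_le_of_frequently_le' (Eventually.frequently ?_)
    filter_upwards [self_mem_nhdsWithin] with r hr
    rw [← lintegral_const_mul' _ _ hCtop]
    refine lintegral_mono_ae ?_
    filter_upwards [hac] with ω hω
    exact ballEnergy_le _ hω r hr
  · intro hlim
    obtain ⟨c, hc1, hc2⟩ := exists_between hlim
    have hfreq := frequently_lt_of_liminf_lt (by isBoundedDefault) hc1
    have hfreq' := hfreq.and_eventually (self_mem_nhdsWithin)
    obtain ⟨r, hr, hrc⟩ := exists_seq_forall_of_frequently hfreq'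
    have hr0 : ∀ n, 0 < r n := fun n => (hrc n).2
    have hmn : ∀ n, Measurable fun ω => ENNReal.ofReal (r n) ^ (-(d : ℝ)) *
        ballEnergy (occupationMeasure Y ν ω) (r n) := fun n => (hEm (r n)).const_mul _
    have hLm : Measurable fun ω => liminf (fun n => ENNReal.ofReal (r n) ^ (-(d : ℝ)) *
        ballEnergy (occupationMeasure Y ν ω) (r n)) atTop := Measurable.liminf hmn
    have hLc : ∫⁻ ω, liminf (fun n => ENNReal.ofReal (r n) ^ (-(d : ℝ)) *
        ballEnergy (occupationMeasure Y ν ω) (r n)) atTop ∂P ≤ c := by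
      refine (lintegral_liminf_le hmn).trans ?_
      exact liminf_le_of_frequently_le' (Frequently.of_forall fun n => (hrc n).1.le)
    have hae := ae_lt_top hLm (hLc.trans_lt hc2).ne
    have key : ∀ᵐ ω ∂P, _ := hae.mono fun ω hω =>
      ac_and_lintegral_le (occupationMeasure Y ν ω) r hr hr0 hω
    refine ⟨key.mono fun ω h => h.1, ?_⟩
    refine (lintegral_mono_ae (key.mono fun ω h => h.2)).trans_lt ?_
    rw [lintegral_const_mul _ hLm]
    exact ENNReal.mul_lt_top (ratioConst_ne_top d).lt_top (hLc.trans_lt hc2)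
end
end

section
/- Let 0 < α' ≤ H < 1, let B₀ᴴ and B₀^{α'} be independent real-valued fractional Brownian motions of Hurst indices H and α' respectively (defined on a product probability space), and set Z₀(t) = B₀ᴴ(t) + B₀^{α'}(t). Let I ⊂ (0,1] be a closed interval. Then there exists a constant C > 0 depending only on α', H and I such that for all integers n ≥ 1, all u, t₁, …, t_n ∈ I, and with t₀ = 0: Var(Z₀(u) | Z₀(t₁), …, Z₀(t_n)) ≥ C [ min_{0≤k≤n} |u − t_k|^{2α'} + min_{0≤k≤n} |u − t_k|^{2H} ]. -/
open MeasureTheory ENNReal Set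

noncomputable section

/-- `B` is a real-valued fractional Brownian motion of Hurst index `H` under `P`:
a centered Gaussian process (every finite linear combination of values of the process is a
centered Gaussian random variable) with covariance
`E[B(s)B(t)] = ½(|s|^{2H} + |t|^{2H} − |s−t|^{2H})`. -/
structure IsFBMReal {Ω : Type*} [MeasurableSpace Ω] (P : Measure Ω) (H : ℝ)
    (B : ℝ → Ω → ℝ) : Prop where
  meas : ∀ t, Measurable (B t)
  gaussian : ∀ (n : ℕ) (t a : Fin n → ℝ),
    ∃ v : NNReal, P.map (fun ω => ∑ j, a j * B (t j) ω) =
      ProbabilityTheory.gaussianReal 0 v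
  cov : ∀ s t : ℝ, ∫ ω, B s ω * B t ω ∂P =
    (|s| ^ (2*H) + |t| ^ (2*H) - |s - t| ^ (2*H)) / 2

namespace SLND

lemma int_add_add {Ω : Type*} [MeasurableSpace Ω] {P : Measure Ω} {f g k : Ω → ℝ}
    (hf : Integrable f P) (hg : Integrable g P) (hk : Integrable k P) :
    ∫ a, (f a + g a + k a) ∂P = ∫ a, f a ∂P + ∫ a, g a ∂P + ∫ a, k a ∂P := by
  rw [← integral_add hf hg]
  exact integral_add (hf.add hg) hk

lemma int_add_sub {Ω : Type*} [MeasurableSpace Ω] {P : Measure Ω} {f g k : Ω → ℝ}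
    (hf : Integrable f P) (hg : Integrable g P) (hk : Integrable k P) :
    ∫ a, (f a + g a - k a) ∂P = ∫ a, f a ∂P + ∫ a, g a ∂P - ∫ a, k a ∂P := by
  rw [← integral_add hf hg]
  exact integral_sub (hf.add hg) hk

/-- triangle function -/
def h (z : ℝ) : ℝ := max 0 (1 - |z|)

lemma h_cont : Continuous h := by unfold h; fun_prop
lemma h_nonneg (z : ℝ) : 0 ≤ h z := le_max_left _ _
lemma h_zero {z : ℝ} (hz : 1 ≤ |z|) : h z = 0 := by
  unfold h; exact max_eq_left (by linarith)
lemma h_lip (x y : ℝ) : |h x - h y| ≤ |x - y| := by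
  unfold h
  have h1 := abs_max_sub_max_le_abs (1 - |x|) (1 - |y|) 0
  rw [max_comm 0, max_comm 0]
  refine h1.trans ?_
  have := abs_abs_sub_abs_le y x
  rw [abs_sub_comm x y]
  have e : 1 - |x| - (1 - |y|) = |y| - |x| := by ring
  rw [e]
  exact this
lemma h_supp : HasCompactSupport h := by
  refine HasCompactSupport.intro (isCompact_Icc (a := (-1 : ℝ)) (b := 1)) ?_
  intro z hz
  apply h_zero
  by_contra hc
  push Not at hc
  exact hz ⟨(abs_lt.1 hc).1.le, (abs_lt.1 hc).2.le⟩

lemma hs_cont (x : ℝ) : Continuous fun z => h (z - x) := h_cont.comp (by fun_prop)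
lemma hs_supp (x : ℝ) : HasCompactSupport fun z => h (z - x) := by
  have := h_supp.comp_homeomorph (Homeomorph.subRight x)
  exact this

lemma hh_int (x y : ℝ) : Integrable fun z => h (z - x) * h (z - y) :=
  ((hs_cont x).mul (hs_cont y)).integrable_of_hasCompactSupport ((hs_supp x).mul_right)

def c0 : ℝ := ∫ z, h z ^ 2

lemma h2_int (x : ℝ) : Integrable fun z => h (z - x) ^ 2 := by
  simpa [sq] using hh_int x x

lemma h2_eq (x : ℝ) : ∫ z, h (z - x) ^ 2 = c0 :=
  integral_sub_right_eq_self (fun z => h z ^ 2) x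

lemma c0_pos : 0 < c0 := by
  unfold c0
  refine Continuous.integral_pos_of_hasCompactSupport_nonneg_nonzero (x := 0) (h_cont.pow 2) ?_
    (fun z => sq_nonneg _) ?_
  · have := h_supp.mul_right (f' := h)
    have e : (fun z => h z ^ 2) = h * h := by ext z; simp [sq]
    rw [e]; exact this
  · simp [h]

lemma prod_int (x y w v : ℝ) :
    Integrable fun z => (h (z - x) - h (z - w)) * (h (z - y) - h (z - v)) := by
  have := ((hh_int x y).sub (hh_int x v)).sub ((hh_int w y).sub (hh_int w v))
  refine this.congr (Filter.Eventually.of_forall fun z => ?_)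
  simp only [Pi.sub_apply]; ring

def G (x : ℝ) : ℝ := ∫ z, (h (z - x) - h z) ^ 2

lemma G_shift (x y : ℝ) : ∫ z, (h (z - x) - h (z - y)) ^ 2 = G (x - y) := by
  unfold G
  rw [← integral_sub_right_eq_self (fun z => (h (z - (x - y)) - h z) ^ 2) y]
  congr 1; ext z; congr 3; ring

lemma d2_int (x y : ℝ) : Integrable fun z => (h (z - x) - h (z - y)) ^ 2 := by
  simpa [sq] using prod_int x x y y

lemma d2_int0 (x : ℝ) : Integrable fun z => (h (z - x) - h z) ^ 2 := by
  simpa using d2_int x 0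

lemma G_neg (x : ℝ) : G (-x) = G x := by
  have h1 := G_shift 0 x
  have h2 := G_shift x 0
  simp only [zero_sub, sub_zero] at h1 h2
  rw [← h1, ← h2]
  congr 1; ext z; ring

lemma G_abs (x : ℝ) : G |x| = G x := by
  rcases abs_choice x with h | h <;> rw [h]
  exact G_neg x

lemma G_nonneg (x : ℝ) : 0 ≤ G x := integral_nonneg fun z => sq_nonneg _

lemma G_bdd (x : ℝ) : G x ≤ 4 * c0 := by
  unfold G
  have i1 := h2_int x
  have i2 : Integrable fun z => h z ^ 2 := by simpa using h2_int 0
  calc ∫ z, (h (z - x) - h z) ^ 2 ≤ ∫ z, (2 * h (z - x) ^ 2 + 2 * h z ^ 2) := by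
        apply integral_mono (d2_int0 x) ((i1.const_mul 2).add (i2.const_mul 2))
        intro z
        simp only [Pi.add_apply]
        nlinarith [sq_nonneg (h (z - x) + h z)]
    _ = 4 * c0 := by
        rw [integral_add (i1.const_mul 2) (i2.const_mul 2), integral_const_mul, integral_const_mul,
          h2_eq]
        change 2 * c0 + 2 * c0 = _
        ring

lemma G_quad (x : ℝ) : G x ≤ (4 + 4 * c0) * x ^ 2 := by
  by_cases hx : |x| ≤ 1
  · have : G x ≤ 4 * x ^ 2 := by
      unfold G
      calc ∫ z, (h (z - x) - h z) ^ 2 ≤ ∫ z, (Icc (-2 : ℝ) 2).indicator (fun _ => x ^ 2) z := by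
            apply integral_mono (d2_int0 x)
            · exact (integrable_indicator_iff measurableSet_Icc).2 (integrableOn_const (by simp))
            intro z
            by_cases hz : z ∈ Icc (-2 : ℝ) 2
            · simp only [indicator_of_mem hz]
              apply sq_le_sq.2
              refine (h_lip _ _).trans (le_of_eq ?_)
              rw [sub_sub_cancel_left, abs_neg]
            · simp only [indicator_of_notMem hz]
              have hz2 : 2 < |z| := by
                by_contra hc
                push Not at hc
                exact hz (abs_le.1 hc)
              rw [h_zero (z := z) (by linarith), h_zero (z := z - x)]
              · simp
              · have := abs_sub_abs_le_abs_sub z x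
                linarith
        _ = 4 * x ^ 2 := by
            rw [integral_indicator measurableSet_Icc]
            simp
            norm_num
    nlinarith [c0_pos, sq_nonneg x, mul_nonneg c0_pos.le (sq_nonneg x)]
  · have h1 : 1 ≤ x ^ 2 := by
      push Not at hx
      rw [← sq_abs]; nlinarith
    have := G_bdd x
    nlinarith [c0_pos]

lemma G_meas : Measurable G := by
  unfold G
  apply StronglyMeasurable.measurable
  apply StronglyMeasurable.integral_prod_right (f := fun x z => (h (z - x) - h z) ^ 2)
  apply Continuous.stronglyMeasurable
  have := h_cont
  unfold Function.uncurry
  fun_prop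

lemma cross (x y : ℝ) :
    ∫ z, (h (z - x) - h z) * (h (z - y) - h z) = (G x + G y - G (x - y)) / 2 := by
  rw [← G_shift x y]
  unfold G
  rw [← int_add_sub (d2_int0 x) (d2_int0 y) (d2_int x y), ← integral_div]
  congr 1; ext z; ring

lemma cross_int (x y : ℝ) : Integrable fun z => (h (z - x) - h z) * (h (z - y) - h z) := by
  simpa using prod_int x y 0 0

def S {ι : Type*} [Fintype ι] (b x : ι → ℝ) : ℝ :=
  ∑ i, ∑ j, b i * b j * ((G (x i) + G (x j) - G (x i - x j)) / 2)

lemma sq_sum {ι : Type*} [Fintype ι] (b f : ι → ℝ) :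
    (∑ i, b i * f i) ^ 2 = ∑ i, ∑ j, b i * b j * (f i * f j) := by
  rw [sq, Finset.sum_mul_sum]
  refine Finset.sum_congr rfl fun i _ => Finset.sum_congr rfl fun j _ => ?_
  ring

lemma S_eq {ι : Type*} [Fintype ι] (b x : ι → ℝ) :
    Integrable (fun z => (∑ i, b i * (h (z - x i) - h z)) ^ 2) ∧
    S b x = ∫ z, (∑ i, b i * (h (z - x i) - h z)) ^ 2 := by
  simp_rw [sq_sum]
  have hi : ∀ i j, Integrable fun z =>
      b i * b j * ((h (z - x i) - h z) * (h (z - x j) - h z)) :=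
    fun i j => (cross_int _ _).const_mul _
  refine ⟨integrable_finsetSum _ fun i _ => integrable_finsetSum _ fun j _ => hi i j, ?_⟩
  rw [integral_finsetSum _ fun i _ => integrable_finsetSum _ fun j _ => hi i j]
  unfold S
  refine Finset.sum_congr rfl fun i _ => ?_
  rw [integral_finsetSum _ fun j _ => hi i j]
  refine Finset.sum_congr rfl fun j _ => ?_
  rw [integral_const_mul, cross]

lemma S_nonneg {ι : Type*} [Fintype ι] (b x : ι → ℝ) : 0 ≤ S b x := by
  rw [(S_eq b x).2]; exact integral_nonneg fun z => sq_nonneg _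

lemma S_lower {ι : Type*} [Fintype ι] (b x : ι → ℝ) (i0 : ι) (h0 : 2 ≤ |x i0|)
    (hsep : ∀ i, i ≠ i0 → 2 ≤ |x i0 - x i|) : b i0 ^ 2 * c0 ≤ S b x := by
  rw [(S_eq b x).2, ← h2_eq (x i0), ← integral_const_mul]
  apply integral_mono ((h2_int _).const_mul _) (S_eq b x).1
  intro z
  by_cases hz : 1 ≤ |z - x i0|
  · simp only [h_zero hz]
    have := sq_nonneg (∑ i, b i * (h (z - x i) - h z))
    simpa using this
  · push Not at hz
    have hz0 : h z = 0 := by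
      apply h_zero
      have := abs_sub_abs_le_abs_sub (x i0) z
      rw [abs_sub_comm] at this
      linarith
    have : ∑ i, b i * (h (z - x i) - h z) = b i0 * h (z - x i0) := by
      rw [Finset.sum_eq_single i0]
      · rw [hz0, sub_zero]
      · intro i _ hi
        rw [hz0, h_zero, sub_zero, mul_zero]
        have h1 := hsep i hi
        have h2 := abs_sub_le (x i0) z (x i)
        rw [abs_sub_comm (x i0) z] at h2
        linarith
      · simp
    simp only [this]
    exact le_of_eq (by ring)

def K (H : ℝ) : ℝ := ∫ l in Ioi (0 : ℝ), G l * l ^ (-2 * H - 1)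

lemma K_nonneg (H : ℝ) : 0 ≤ K H :=
  setIntegral_nonneg measurableSet_Ioi fun l hl =>
    mul_nonneg (G_nonneg _) (Real.rpow_nonneg (le_of_lt hl) _)

lemma K_int {H : ℝ} (h0 : 0 < H) (h1 : H < 1) (x : ℝ) :
    IntegrableOn (fun l => G (x * l) * l ^ (-2 * H - 1)) (Ioi 0) := by
  have hm : Measurable (fun l : ℝ => G (x * l) * l ^ (-2 * H - 1)) :=
    (G_meas.comp (by fun_prop)).mul (by fun_prop)
  rw [← Ioc_union_Ioi_eq_Ioi zero_le_one]
  refine IntegrableOn.union ?_ ?_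
  · have : IntegrableOn (fun l : ℝ => (4 + 4 * c0) * x ^ 2 * l ^ (1 - 2 * H)) (Ioc 0 1) := by
      have := (intervalIntegral.intervalIntegrable_rpow' (a := 0) (b := 1)
        (r := 1 - 2 * H) (by linarith))
      rw [intervalIntegrable_iff_integrableOn_Ioc_of_le zero_le_one] at this
      exact this.const_mul _
    refine Integrable.mono' this hm.aestronglyMeasurable ?_
    filter_upwards [ae_restrict_mem measurableSet_Ioc] with l hl
    have hl0 : 0 < l := hl.1
    rw [Real.norm_of_nonneg (mul_nonneg (G_nonneg _) (Real.rpow_nonneg hl0.le _))]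
    have e : l ^ (1 - 2 * H) = l ^ 2 * l ^ (-2 * H - 1) := by
      rw [← Real.rpow_natCast, ← Real.rpow_add hl0]; congr 1; push_cast; ring
    rw [e]
    have := mul_le_mul_of_nonneg_right (G_quad (x * l)) (Real.rpow_nonneg hl0.le (-2 * H - 1))
    refine this.trans (le_of_eq ?_)
    ring
  · have : IntegrableOn (fun l : ℝ => (4 * c0) * l ^ (-2 * H - 1)) (Ioi 1) :=
      (integrableOn_Ioi_rpow_of_lt (by linarith) one_pos).const_mul _
    refine Integrable.mono' this hm.aestronglyMeasurable ?_
    filter_upwards [ae_restrict_mem measurableSet_Ioi] with l hl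
    have hl0 : (0 : ℝ) < l := lt_trans one_pos hl
    rw [Real.norm_of_nonneg (mul_nonneg (G_nonneg _) (Real.rpow_nonneg hl0.le _))]
    exact mul_le_mul_of_nonneg_right (G_bdd _) (Real.rpow_nonneg hl0.le _)

lemma K_scale {H : ℝ} (h0 : 0 < H) (x : ℝ) :
    ∫ l in Ioi (0 : ℝ), G (x * l) * l ^ (-2 * H - 1) = K H * |x| ^ (2 * H) := by
  by_cases hx : x = 0
  · subst hx
    have : G 0 = 0 := by simp [G]
    simp [this, Real.zero_rpow (by linarith : 2 * H ≠ 0)]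
  have hp : 0 < |x| := abs_pos.2 hx
  have := integral_comp_mul_left_Ioi (fun l => G l * l ^ (-2 * H - 1)) 0 hp
  rw [mul_zero, smul_eq_mul] at this
  change _ = |x|⁻¹ * K H at this
  have e : ∫ l in Ioi (0 : ℝ), G (x * l) * l ^ (-2 * H - 1) =
      ∫ l in Ioi (0 : ℝ), |x| ^ (2 * H + 1) * (G (|x| * l) * (|x| * l) ^ (-2 * H - 1)) := by
    apply setIntegral_congr_fun measurableSet_Ioi
    intro l hl
    have hl : 0 < l := hl
    have e1 : G (|x| * l) = G (x * l) := by
      rw [← G_abs (x * l), abs_mul, abs_of_pos hl]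
    simp only [e1]
    rw [Real.mul_rpow hp.le hl.le]
    have e2 : |x| ^ (2 * H + 1) * |x| ^ (-2 * H - 1) = 1 := by
      rw [← Real.rpow_add hp]; ring_nf; simp
    linear_combination (-(G (x * l) * l ^ (-2 * H - 1))) * e2
  rw [e, integral_const_mul, this, Real.rpow_add hp, Real.rpow_one]
  field_simp

lemma form_lower {H : ℝ} (h0 : 0 < H) (h1 : H < 1) {ι : Type*} [Fintype ι] (b x : ι → ℝ) (i0 : ι)
    {r : ℝ} (hr : 0 < r) (hx0 : r ≤ |x i0|) (hsep : ∀ i, i ≠ i0 → r ≤ |x i0 - x i|) :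
    b i0 ^ 2 * (c0 * (2 ^ (-2 * H) / (2 * H))) * r ^ (2 * H) ≤
      K H * ∑ i, ∑ j, b i * b j *
        ((|x i| ^ (2 * H) + |x j| ^ (2 * H) - |x i - x j| ^ (2 * H)) / 2) := by
  have hi : ∀ i j, IntegrableOn (fun l : ℝ => b i * b j *
      ((G (x i * l) * l ^ (-2 * H - 1) + G (x j * l) * l ^ (-2 * H - 1)
        - G ((x i - x j) * l) * l ^ (-2 * H - 1)) / 2)) (Ioi 0) := fun i j =>
    ((((K_int h0 h1 _).add (K_int h0 h1 _)).sub (K_int h0 h1 _)).div_const 2).const_mul _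
  have hS : (fun l : ℝ => S b (fun i => x i * l) * l ^ (-2 * H - 1)) = fun l =>
      ∑ i, ∑ j, b i * b j *
      ((G (x i * l) * l ^ (-2 * H - 1) + G (x j * l) * l ^ (-2 * H - 1)
        - G ((x i - x j) * l) * l ^ (-2 * H - 1)) / 2) := by
    ext l
    unfold S
    simp_rw [Finset.sum_mul]
    refine Finset.sum_congr rfl fun i _ => Finset.sum_congr rfl fun j _ => ?_
    rw [sub_mul (x i)]
    ring
  have hSi : IntegrableOn (fun l : ℝ => S b (fun i => x i * l) * l ^ (-2 * H - 1)) (Ioi 0) := by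
    rw [hS]
    exact integrable_finsetSum _ fun i _ => integrable_finsetSum _ fun j _ => hi i j
  have hSe : ∫ l in Ioi (0 : ℝ), S b (fun i => x i * l) * l ^ (-2 * H - 1) =
      K H * ∑ i, ∑ j, b i * b j *
        ((|x i| ^ (2 * H) + |x j| ^ (2 * H) - |x i - x j| ^ (2 * H)) / 2) := by
    rw [hS, integral_finsetSum _ fun i _ => integrable_finsetSum _ fun j _ => hi i j,
      Finset.mul_sum]
    refine Finset.sum_congr rfl fun i _ => ?_
    rw [integral_finsetSum _ fun j _ => hi i j, Finset.mul_sum]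
    refine Finset.sum_congr rfl fun j _ => ?_
    rw [integral_const_mul, integral_div,
      int_add_sub (K_int h0 h1 _) (K_int h0 h1 _) (K_int h0 h1 _), K_scale h0, K_scale h0, K_scale h0]
    ring
  rw [← hSe]
  have hr2 : 0 < 2 / r := by positivity
  have hsub : Ioi (2 / r) ⊆ Ioi (0 : ℝ) := Ioi_subset_Ioi hr2.le
  calc _ = ∫ l in Ioi (2 / r), b i0 ^ 2 * c0 * l ^ (-2 * H - 1) := by
        rw [integral_const_mul, integral_Ioi_rpow_of_lt (by linarith) hr2, sub_add_cancel,
          Real.div_rpow (by norm_num) hr.le]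
        have : r ^ (-2 * H) = (r ^ (2 * H))⁻¹ := by rw [← Real.rpow_neg hr.le]; ring_nf
        rw [this]
        field_simp
    _ ≤ ∫ l in Ioi (2 / r), S b (fun i => x i * l) * l ^ (-2 * H - 1) := by
        apply setIntegral_mono_on ((integrableOn_Ioi_rpow_of_lt (by linarith) hr2).const_mul _)
          (hSi.mono_set hsub) measurableSet_Ioi
        intro l hl
        have hl' : 2 / r < l := hl
        have hl0 : 0 < l := hr2.trans hl'
        have hrl : 2 ≤ r * l := by
          rw [div_lt_iff₀ hr] at hl'; linarith
        apply mul_le_mul_of_nonneg_right _ (Real.rpow_nonneg hl0.le _)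
        apply S_lower b (fun i => x i * l) i0
        · simp only [abs_mul, abs_of_pos hl0]
          exact hrl.trans (mul_le_mul_of_nonneg_right hx0 hl0.le)
        · intro i hi
          simp only [← sub_mul, abs_mul, abs_of_pos hl0]
          exact hrl.trans (mul_le_mul_of_nonneg_right (hsep i hi) hl0.le)
    _ ≤ _ := by
        apply setIntegral_mono_set hSi
        · filter_upwards [ae_restrict_mem measurableSet_Ioi] with l hl
          exact mul_nonneg (S_nonneg _ _) (Real.rpow_nonneg (le_of_lt hl) _)
        · exact hsub.eventuallyLE

section prob
variable {Ω : Type*} [MeasurableSpace Ω] {P : Measure Ω} {H : ℝ} {B : ℝ → Ω → ℝ}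

lemma map_eq (hB : IsFBMReal P H B) (t : ℝ) :
    ∃ v : NNReal, P.map (B t) = ProbabilityTheory.gaussianReal 0 v := by
  obtain ⟨v, hv⟩ := hB.gaussian 1 (fun _ => t) (fun _ => 1)
  refine ⟨v, ?_⟩
  simpa using hv

lemma memLp (hB : IsFBMReal P H B) (t : ℝ) : MemLp (B t) 2 P := by
  obtain ⟨v, hv⟩ := map_eq hB t
  have h1 : MemLp id 2 (P.map (B t)) := by
    rw [hv]; exact ProbabilityTheory.memLp_id_gaussianReal 2
  have := (memLp_map_measure_iff h1.1 (hB.meas t).aemeasurable).1 h1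
  simpa using this

lemma mean (hB : IsFBMReal P H B) (t : ℝ) : ∫ ω, B t ω ∂P = 0 := by
  obtain ⟨v, hv⟩ := map_eq hB t
  have := integral_map (μ := P) (hB.meas t).aemeasurable (f := fun y : ℝ => y)
    (by fun_prop)
  rw [← this, hv]
  exact ProbabilityTheory.integral_id_gaussianReal

lemma comb_memLp (hB : IsFBMReal P H B) {n : ℕ} (u : ℝ) (t a : Fin n → ℝ) :
    MemLp (fun ω => B u ω - ∑ j, a j * B (t j) ω) 2 P :=
  (memLp hB u).sub (memLp_finsetSum _ fun j _ => (memLp hB (t j)).const_mul (a j))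

lemma comb_mean [IsProbabilityMeasure P] (hB : IsFBMReal P H B) {n : ℕ} (u : ℝ) (t a : Fin n → ℝ) :
    ∫ ω, (B u ω - ∑ j, a j * B (t j) ω) ∂P = 0 := by
  have hi : ∀ t, Integrable (B t) P := fun t => (memLp hB t).integrable (by norm_num)
  rw [integral_sub (hi u) (integrable_finsetSum _ fun j _ => (hi _).const_mul _),
    integral_finsetSum _ fun j _ => (hi _).const_mul _]
  simp [integral_const_mul, mean hB]

lemma sum_var (hB : IsFBMReal P H B) {ι : Type*} [Fintype ι] (b x : ι → ℝ) :
    ∫ ω, (∑ i, b i * B (x i) ω) ^ 2 ∂P = ∑ i, ∑ j, b i * b j *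
        ((|x i| ^ (2 * H) + |x j| ^ (2 * H) - |x i - x j| ^ (2 * H)) / 2) := by
  simp_rw [sq_sum]
  have hi : ∀ i j, Integrable (fun ω => b i * b j * (B (x i) ω * B (x j) ω)) P :=
    fun i j => ((memLp hB _).integrable_mul (memLp hB _)).const_mul _
  rw [integral_finsetSum _ fun i _ => integrable_finsetSum _ fun j _ => hi i j]
  refine Finset.sum_congr rfl fun i _ => ?_
  rw [integral_finsetSum _ fun j _ => hi i j]
  refine Finset.sum_congr rfl fun j _ => ?_
  rw [integral_const_mul, hB.cov]

def CC (H : ℝ) : ℝ := c0 * (2 ^ (-2 * H) / (2 * H)) / (K H + 1)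

lemma CC_pos (h0 : 0 < H) : 0 < CC H := by
  have := c0_pos
  have := K_nonneg H
  unfold CC
  positivity

lemma slnd (hB : IsFBMReal P H B) (h0 : 0 < H) (h1 : H < 1) {n : ℕ} (hn : 1 ≤ n)
    {u : ℝ} (hu : 0 < u) (t a : Fin n → ℝ) :
    CC H * min (u ^ (2 * H)) (⨅ j, |u - t j| ^ (2 * H)) ≤
      ∫ ω, (B u ω - ∑ j, a j * B (t j) ω) ^ 2 ∂P := by
  have hV : 0 ≤ ∫ ω, (B u ω - ∑ j, a j * B (t j) ω) ^ 2 ∂P :=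
    integral_nonneg fun _ => sq_nonneg _
  have : Nonempty (Fin n) := ⟨⟨0, hn⟩⟩
  obtain ⟨j0, hj0⟩ := Finite.exists_min fun j => |u - t j|
  have hbdd : BddBelow (range fun j => |u - t j| ^ (2 * H)) := (finite_range _).bddBelow
  have hle : (⨅ j, |u - t j| ^ (2 * H)) ≤ |u - t j0| ^ (2 * H) := ciInf_le hbdd j0
  set r := min u |u - t j0| with hrdef
  have hm : min (u ^ (2 * H)) (⨅ j, |u - t j| ^ (2 * H)) ≤ r ^ (2 * H) := by
    rcases min_choice u |u - t j0| with hh | hh <;> rw [hrdef, hh]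
    · exact min_le_left _ _
    · exact (min_le_right _ _).trans hle
  refine (mul_le_mul_of_nonneg_left hm (CC_pos h0).le).trans ?_
  have hr0 : 0 ≤ r := le_min hu.le (abs_nonneg _)
  rcases hr0.eq_or_lt with hr | hr
  · rw [← hr, Real.zero_rpow (by linarith), mul_zero]; exact hV
  let b : Option (Fin n) → ℝ := fun o => o.elim 1 (fun j => - a j)
  let x : Option (Fin n) → ℝ := fun o => o.elim u t
  have key := form_lower h0 h1 b x none hr
    (by change r ≤ |u|; rw [abs_of_pos hu]; exact min_le_left _ _)
    (by
      rintro (_ | j) hj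
      · exact absurd rfl hj
      · exact (min_le_right _ _).trans (hj0 j))
  rw [← sum_var hB b x] at key
  have e : ∀ ω, ∑ i, b i * B (x i) ω = B u ω - ∑ j, a j * B (t j) ω := by
    intro ω
    rw [Fintype.sum_option]
    simp [b, x, sub_eq_add_neg]
  simp_rw [e] at key
  have hb : b none = 1 := rfl
  rw [hb, one_pow, one_mul] at key
  have hK := K_nonneg H
  unfold CC
  rw [div_mul_eq_mul_div, div_le_iff₀ (by linarith)]
  nlinarith
end prob

end SLND

/-- Strong local nondeterminism of `Z₀ = B₀ᴴ + B₀^{α'}` (independent fractional Brownian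
motions of Hurst indices `H ≥ α'` on a product probability space): for a closed interval
`I = [c,e] ⊂ (0,1]` there is `C > 0` (depending only on `α'`, `H`, `I`) such that for every
`n ≥ 1`, `u, t₁, …, t_n ∈ I` and `t₀ = 0`,
`Var(Z₀(u) | Z₀(t₁), …, Z₀(t_n)) ≥ C [min_{0≤k≤n}|u−t_k|^{2α'} + min_{0≤k≤n}|u−t_k|^{2H}]`,
where the conditional variance is the squared `L²`-distance from the linear span, i.e.
`inf` over `a ∈ ℝⁿ` of `E[(Z₀(u) − Σ_j a_j Z₀(t_j))²]` (note `|u − t₀| = u`). -/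
theorem slnd_mixed_fbm {Ω₁ Ω₂ : Type*} [MeasurableSpace Ω₁] [MeasurableSpace Ω₂]
    (P₁ : Measure Ω₁) (P₂ : Measure Ω₂)
    [IsProbabilityMeasure P₁] [IsProbabilityMeasure P₂]
    (H α' : ℝ) (hα' : 0 < α') (hα'H : α' ≤ H) (hH : H < 1)
    (B₁ : ℝ → Ω₁ → ℝ) (B₂ : ℝ → Ω₂ → ℝ)
    (hB₁ : IsFBMReal P₁ H B₁) (hB₂ : IsFBMReal P₂ α' B₂)
    (c e : ℝ) (hc : 0 < c) (hce : c ≤ e) (he : e ≤ 1) :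
    ∃ C : ℝ, 0 < C ∧ ∀ n : ℕ, 1 ≤ n → ∀ u ∈ Set.Icc c e, ∀ t : Fin n → ℝ,
      (∀ j, t j ∈ Set.Icc c e) →
      C * (min (u ^ (2 * α')) (⨅ j, |u - t j| ^ (2 * α')) +
           min (u ^ (2 * H)) (⨅ j, |u - t j| ^ (2 * H))) ≤
        ⨅ a : Fin n → ℝ,
          ∫ ω : Ω₁ × Ω₂,
            ((B₁ u ω.1 + B₂ u ω.2) - ∑ j, a j * (B₁ (t j) ω.1 + B₂ (t j) ω.2)) ^ 2
            ∂(P₁.prod P₂) := by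
  have hH0 : 0 < H := lt_of_lt_of_le hα' hα'H
  have hα1 : α' < 1 := lt_of_le_of_lt hα'H hH
  have p1 := SLND.CC_pos hH0
  have p2 := SLND.CC_pos hα'
  refine ⟨min (SLND.CC H) (SLND.CC α'), lt_min p1 p2, ?_⟩
  intro n hn u hu t ht
  have hu0 : 0 < u := hc.trans_le hu.1
  apply le_ciInf
  intro a
  have s1 := SLND.slnd hB₁ hH0 hH hn hu0 t a
  have s2 := SLND.slnd hB₂ hα' hα1 hn hu0 t a
  have m1 := SLND.comb_memLp hB₁ u t a
  have m2 := SLND.comb_memLp hB₂ u t a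
  have z1 := SLND.comb_mean hB₁ u t a
  set X : Ω₁ → ℝ := fun ω => B₁ u ω - ∑ j, a j * B₁ (t j) ω with hX
  set Y : Ω₂ → ℝ := fun ω => B₂ u ω - ∑ j, a j * B₂ (t j) ω with hY
  have e : ∀ ω : Ω₁ × Ω₂,
      ((B₁ u ω.1 + B₂ u ω.2) - ∑ j, a j * (B₁ (t j) ω.1 + B₂ (t j) ω.2)) ^ 2 =
      X ω.1 ^ 2 * 1 + 1 * Y ω.2 ^ 2 + 2 * (X ω.1 * Y ω.2) := by
    intro ω
    simp only [hX, hY, mul_add, Finset.sum_add_distrib]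
    ring
  have i1 : Integrable (fun ω : Ω₁ × Ω₂ => X ω.1 ^ 2 * 1) (P₁.prod P₂) :=
    m1.integrable_sq.mul_prod (integrable_const (1 : ℝ))
  have i2 : Integrable (fun ω : Ω₁ × Ω₂ => 1 * Y ω.2 ^ 2) (P₁.prod P₂) :=
    (integrable_const (1 : ℝ)).mul_prod m2.integrable_sq
  have i3 : Integrable (fun ω : Ω₁ × Ω₂ => X ω.1 * Y ω.2) (P₁.prod P₂) :=
    (m1.integrable (by norm_num)).mul_prod (m2.integrable (by norm_num))
  have e1 : ∫ ω : Ω₁ × Ω₂, X ω.1 ^ 2 * 1 ∂(P₁.prod P₂) = ∫ ω, X ω ^ 2 ∂P₁ := by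
    rw [integral_prod_mul (fun ω => X ω ^ 2) (fun _ : Ω₂ => (1 : ℝ))]; simp
  have e2 : ∫ ω : Ω₁ × Ω₂, 1 * Y ω.2 ^ 2 ∂(P₁.prod P₂) = ∫ ω, Y ω ^ 2 ∂P₂ := by
    rw [integral_prod_mul (fun _ : Ω₁ => (1 : ℝ)) (fun ω => Y ω ^ 2)]; simp
  have e3 : ∫ ω : Ω₁ × Ω₂, X ω.1 * Y ω.2 ∂(P₁.prod P₂) = 0 := by
    rw [integral_prod_mul X Y, z1, zero_mul]
  simp_rw [e]
  rw [SLND.int_add_add i1 i2 (i3.const_mul 2), e1, e2, integral_const_mul, e3]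
  have q1 : 0 ≤ min (u ^ (2 * H)) (⨅ j, |u - t j| ^ (2 * H)) :=
    le_min (Real.rpow_nonneg hu0.le _) (Real.iInf_nonneg fun j => Real.rpow_nonneg (abs_nonneg _) _)
  have q2 : 0 ≤ min (u ^ (2 * α')) (⨅ j, |u - t j| ^ (2 * α')) :=
    le_min (Real.rpow_nonneg hu0.le _) (Real.iInf_nonneg fun j => Real.rpow_nonneg (abs_nonneg _) _)
  have w1 := mul_le_mul_of_nonneg_right (min_le_left (SLND.CC H) (SLND.CC α')) q1
  have w2 := mul_le_mul_of_nonneg_right (min_le_right (SLND.CC H) (SLND.CC α')) q2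
  rw [mul_add]
  linarith
end
end

section
/- Let 0 < α' ≤ H < 1, let B₀ᴴ and B₀^{α'} be independent real-valued fractional Brownian motions of Hurst indices H and α' respectively (defined on a product probability space), and set Z₀(t) = B₀ᴴ(t) + B₀^{α'}(t). Let I ⊂ (0,1] be a closed interval. Then there exists a constant C > 0 depending only on α', H and I such that for every t ∈ I and every 0 < r ≤ t: Var(Z₀(t) | Z₀(s), s ∈ I with |s − t| ≥ r) ≥ C r^{2α'}, i.e. the squared L²-distance of Z₀(t) from the closed linear span of { Z₀(s) : s ∈ I, |s−t| ≥ r } is at least C r^{2α'}. -/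
open MeasureTheory ENNReal Set

noncomputable section

/-- tent function -/
def tent (y : ℝ) : ℝ := max 0 (1 - |y|)

theorem tent_cont : Continuous tent := by unfold tent; fun_prop

theorem tent_nonneg (y : ℝ) : 0 ≤ tent y := le_max_left _ _

theorem tent_le (y : ℝ) : tent y ≤ 1 :=
  max_le (by norm_num) (by linarith [abs_nonneg y])

theorem tent_zero {y : ℝ} (h : 1 ≤ |y|) : tent y = 0 := max_eq_left (by linarith)

theorem tent_lip (x y : ℝ) : |tent x - tent y| ≤ |x - y| := by
  unfold tent
  calc _ ≤ max |(0:ℝ) - 0| |(1 - |x|) - (1 - |y|)| := abs_max_sub_max_le_max _ _ _ _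
    _ ≤ |x - y| := by
      apply max_le (by simp)
      rw [show (1 - |x|) - (1 - |y|) = -(|x| - |y|) by ring, abs_neg]
      exact abs_abs_sub_abs_le x y

theorem tent_supp : HasCompactSupport tent := by
  apply HasCompactSupport.intro (isCompact_Icc (a := (-1:ℝ)) (b := 1))
  intro x hx
  apply tent_zero
  by_contra! h
  exact hx (abs_le.mp h.le)

theorem tent_supp_sub (x : ℝ) : HasCompactSupport (fun z => tent (z - x)) := by
  apply HasCompactSupport.intro (isCompact_Icc (a := (x-1:ℝ)) (b := x+1))
  intro z hz
  apply tent_zero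
  by_contra! h
  have := abs_le.mp h.le
  exact hz ⟨by linarith [this.1], by linarith [this.2]⟩

/-- increment of tent -/
def psi (x z : ℝ) : ℝ := tent z - tent (z - x)

theorem psi_cont (x : ℝ) : Continuous (psi x) := by
  unfold psi
  have := tent_cont
  fun_prop

theorem psi_supp (x : ℝ) : HasCompactSupport (psi x) := tent_supp.sub (tent_supp_sub x)

theorem psi_mul_int (x y : ℝ) : Integrable (fun z => psi x z * psi y z) :=
  ((psi_cont x).mul (psi_cont y)).integrable_of_hasCompactSupport ((psi_supp x).mul_right)

/-- half squared norm of the increment -/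
def DD (x : ℝ) : ℝ := (∫ z, psi x z ^ 2) / 2

theorem psi_sq_int (x : ℝ) : Integrable (fun z => psi x z ^ 2) := by
  simpa [sq] using psi_mul_int x x

theorem tent_sq_int (x : ℝ) : Integrable (fun z => tent (z - x) ^ 2) := by
  have h : Continuous (fun z => tent (z - x)) := by
    have := tent_cont
    fun_prop
  have := (h.mul h).integrable_of_hasCompactSupport (μ := volume) ((tent_supp_sub x).mul_right)
  simpa [sq, Pi.mul_def] using this

theorem DD_meas : Measurable DD := by
  have h : StronglyMeasurable (fun p : ℝ × ℝ => psi p.1 p.2 ^ 2) := by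
    apply Continuous.stronglyMeasurable
    have := tent_cont
    unfold psi
    fun_prop
  have h2 := h.integral_prod_right' (ν := (volume : Measure ℝ))
  exact h2.measurable.div_const 2

theorem DD_nonneg (x : ℝ) : 0 ≤ DD x :=
  div_nonneg (integral_nonneg fun z => sq_nonneg _) (by norm_num)

theorem DD_sub (x y : ℝ) : ∫ z, (psi x z - psi y z) ^ 2 = 2 * DD (x - y) := by
  rw [← integral_add_right_eq_self (fun z => (psi x z - psi y z) ^ 2) y]
  unfold DD
  rw [mul_div_cancel₀ _ (by norm_num)]
  congr 1
  ext z
  unfold psi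
  rw [show z + y - y = z by ring, show z + y - x = z - (x - y) by ring]
  ring

theorem DD_neg (x : ℝ) : DD (-x) = DD x := by
  have h := DD_sub 0 x
  have h0 : ∀ z, psi 0 z = 0 := fun z => by simp [psi]
  simp only [h0, zero_sub, neg_sq] at h
  unfold DD at h ⊢
  linarith

theorem DD_abs (x : ℝ) : DD |x| = DD x := by
  rcases abs_choice x with h | h <;> rw [h]
  exact DD_neg x

theorem DD_zero : DD 0 = 0 := by simp [DD, psi]

theorem psi_inner (x y : ℝ) : ∫ z, psi x z * psi y z = DD x + DD y - DD (x - y) := by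
  have h := DD_sub x y
  have e1 : ∫ z, (psi x z - psi y z) ^ 2 =
      (∫ z, psi x z ^ 2) + (∫ z, psi y z ^ 2) - 2 * ∫ z, psi x z * psi y z := by
    rw [← integral_const_mul, ← integral_add (psi_sq_int x) (psi_sq_int y),
      ← integral_sub (f := fun z => psi x z ^ 2 + psi y z ^ 2)
      ((psi_sq_int x).add (psi_sq_int y)) ((psi_mul_int x y).const_mul 2)]
    congr 1
    ext z
    ring
  unfold DD at h ⊢
  linarith

/-- squared norm of tent -/
def g0 : ℝ := ∫ z, tent z ^ 2

theorem g0_sub (x : ℝ) : ∫ z, tent (z - x) ^ 2 = g0 :=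
  integral_sub_right_eq_self (fun z => tent z ^ 2) x

theorem g0_pos : 0 < g0 := by
  unfold g0
  apply Continuous.integral_pos_of_hasCompactSupport_nonneg_nonzero (x := 0)
  · exact tent_cont.pow 2
  · have := tent_supp.mul_right (f' := tent)
    simpa [sq, Pi.mul_def] using this
  · intro z; exact sq_nonneg _
  · simp [tent]

theorem int_bound (f : ℝ → ℝ) (M : ℝ) (a b : ℝ) (hab : a ≤ b) (hf : Integrable f) 
    (h0 : ∀ z, z ∉ Icc a b → f z = 0) (h1 : ∀ z, f z ≤ M) : ∫ z, f z ≤ M * (b - a) := by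
  rw [← setIntegral_eq_integral_of_forall_compl_eq_zero (s := Icc a b) (fun x hx => h0 x hx)]
  calc _ ≤ ∫ z in Icc a b, M := by
        apply setIntegral_mono_on hf.integrableOn (by simp) measurableSet_Icc
        intro z _; exact h1 z
    _ = _ := by simp [hab, mul_comm]

theorem g0_le : g0 ≤ 2 := by
  have h := int_bound (fun z => tent z ^ 2) 1 (-1) 1 (by norm_num)
    (by simpa using tent_sq_int 0) (fun z hz => by
      show tent z ^ 2 = 0
      rw [tent_zero, zero_pow two_ne_zero]
      by_contra! h
      exact hz (abs_le.mp h.le))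
    (fun z => pow_le_one₀ (tent_nonneg z) (tent_le z))
  unfold g0
  linarith

theorem DD_le (x : ℝ) : DD x ≤ 2 := by
  have : ∫ z, psi x z ^ 2 ≤ ∫ z, (tent z ^ 2 + tent (z - x) ^ 2) := by
    apply integral_mono (psi_sq_int x) ((by simpa using tent_sq_int 0 : Integrable fun z => tent z ^ 2).add (tent_sq_int x))
    intro z
    have := mul_nonneg (tent_nonneg z) (tent_nonneg (z - x))
    simp only [psi]
    nlinarith
  rw [integral_add (by simpa using tent_sq_int 0) (tent_sq_int x), g0_sub] at this
  have h2 := g0_le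
  unfold g0 at h2 this
  unfold DD
  linarith

theorem DD_le_sq (x : ℝ) : DD x ≤ 2 * x ^ 2 := by
  rcases le_or_gt |x| 1 with hx | hx
  · have h := int_bound (fun z => psi x z ^ 2) (x ^ 2) (-2) 2 (by norm_num) (psi_sq_int x)
      (fun z hz => by
        have hz' : 2 < |z| := by
          by_contra! h
          exact hz (abs_le.mp h)
        have : |z| - |x| ≤ |z - x| := abs_sub_abs_le_abs_sub z x
        simp only [psi]
        rw [tent_zero (by linarith), tent_zero (by linarith)]
        simp)
      (fun z => by
        apply sq_le_sq.mpr
        have := tent_lip z (z - x)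
        simpa [psi] using this)
    unfold DD
    linarith
  · have := DD_le x
    have : 1 < x ^ 2 := by
      rw [← sq_abs]; nlinarith
    linarith

theorem DD_int (α : ℝ) (h0 : 0 < α) (h1 : α < 1) (x : ℝ) :
    IntegrableOn (fun u => DD (x / u) * u ^ (2 * α - 1)) (Ioi 0) := by
  have hm : Measurable (fun u => DD (x / u) * u ^ (2 * α - 1)) :=
    (DD_meas.comp (measurable_const.div measurable_id)).mul (by fun_prop)
  rw [← Ioc_union_Ioi_eq_Ioi (zero_le_one (α := ℝ))]
  apply IntegrableOn.union
  · have hi : IntegrableOn (fun u : ℝ => 2 * u ^ (2 * α - 1)) (Ioc 0 1) := by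
      have := (intervalIntegral.intervalIntegrable_rpow' (a := 0) (b := 1) (r := 2 * α - 1)
        (by linarith)).const_mul 2
      exact (intervalIntegrable_iff_integrableOn_Ioc_of_le zero_le_one).mp this
    apply Integrable.mono' hi hm.aestronglyMeasurable
    filter_upwards [ae_restrict_mem measurableSet_Ioc] with u hu
    have hp := Real.rpow_nonneg hu.1.le (2 * α - 1)
    rw [Real.norm_of_nonneg (mul_nonneg (DD_nonneg _) hp)]
    exact mul_le_mul_of_nonneg_right (DD_le _) hp
  · have hi : IntegrableOn (fun u : ℝ => 2 * x ^ 2 * u ^ (2 * α - 3)) (Ioi 1) := by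
      exact (integrableOn_Ioi_rpow_of_lt (by linarith) zero_lt_one).const_mul _
    apply Integrable.mono' hi hm.aestronglyMeasurable
    filter_upwards [ae_restrict_mem measurableSet_Ioi] with u hu
    have hu0 : 0 < u := lt_trans zero_lt_one hu
    have hp := Real.rpow_nonneg hu0.le (2 * α - 1)
    rw [Real.norm_of_nonneg (mul_nonneg (DD_nonneg _) hp)]
    calc _ ≤ 2 * (x / u) ^ 2 * u ^ (2 * α - 1) := mul_le_mul_of_nonneg_right (DD_le_sq _) hp
      _ = _ := by
        rw [show 2 * α - 3 = 2 * α - 1 - (2:ℕ) by push_cast; ring, Real.rpow_sub_natCast hu0.ne']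
        field_simp

/-- normalising constant -/
def KK (α : ℝ) : ℝ := ∫ u in Ioi (0:ℝ), DD (1 / u) * u ^ (2 * α - 1)

theorem DD_scale (α : ℝ) (h0 : 0 < α) (x : ℝ) :
    ∫ u in Ioi (0:ℝ), DD (x / u) * u ^ (2 * α - 1) = |x| ^ (2 * α) * KK α := by
  rcases eq_or_ne x 0 with rfl | hx
  · simp [DD_zero, Real.zero_rpow (by linarith : 2 * α ≠ 0)]
  have hx' : 0 < |x| := abs_pos.mpr hx
  have e : ∫ u in Ioi (0:ℝ), DD (x / u) * u ^ (2 * α - 1)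
      = ∫ u in Ioi (0:ℝ), DD (|x| / u) * u ^ (2 * α - 1) := by
    apply setIntegral_congr_fun measurableSet_Ioi
    intro u hu
    simp only
    rw [← DD_abs (x / u), abs_div, abs_of_pos (show 0 < u from hu)]
  rw [e]
  have h := integral_comp_mul_left_Ioi (fun u => DD (|x| / u) * u ^ (2 * α - 1)) 0 hx'
  rw [mul_zero] at h
  have e2 : ∫ u in Ioi (0:ℝ), DD (|x| / (|x| * u)) * (|x| * u) ^ (2 * α - 1)
      = |x| ^ (2 * α - 1) * KK α := by
    unfold KK
    rw [← integral_const_mul]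
    apply setIntegral_congr_fun measurableSet_Ioi
    intro u hu
    have hu : 0 < u := hu
    simp only
    rw [Real.mul_rpow hx'.le hu.le, show |x| / (|x| * u) = 1 / u by field_simp]
    ring
  rw [e2, smul_eq_mul, Real.rpow_sub_one hx'.ne'] at h
  field_simp at h
  linarith

/-- quadratic form at scale u -/
def QQ {m : ℕ} (b x : Fin m → ℝ) (u : ℝ) : ℝ := ∫ z, (∑ i, b i * psi (x i / u) z) ^ 2

theorem QQ_eq {m : ℕ} (b x : Fin m → ℝ) (u : ℝ) : QQ b x u =
    ∑ i, ∑ k, b i * b k * (DD (x i / u) + DD (x k / u) - DD ((x i - x k) / u)) := by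
  have e : ∀ z, (∑ i, b i * psi (x i / u) z) ^ 2 =
      ∑ i, ∑ k, b i * b k * (psi (x i / u) z * psi (x k / u) z) := by
    intro z
    rw [sq, Finset.sum_mul_sum]
    refine Finset.sum_congr rfl fun i _ => Finset.sum_congr rfl fun k _ => ?_
    ring
  unfold QQ
  simp_rw [e]
  rw [integral_finsetSum _ fun i _ => integrable_finsetSum _ fun k _ =>
    (psi_mul_int _ _).const_mul _]
  refine Finset.sum_congr rfl fun i _ => ?_
  rw [integral_finsetSum _ fun k _ => (psi_mul_int _ _).const_mul _]
  refine Finset.sum_congr rfl fun k _ => ?_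
  rw [integral_const_mul, psi_inner, sub_div]

theorem QQ_int (α : ℝ) (h0 : 0 < α) (h1 : α < 1) {m : ℕ} (b x : Fin m → ℝ) :
    IntegrableOn (fun u => QQ b x u * u ^ (2 * α - 1)) (Ioi 0) ∧
    ∫ u in Ioi (0:ℝ), QQ b x u * u ^ (2 * α - 1) =
      (∑ i, ∑ k, b i * b k * (|x i| ^ (2*α) + |x k| ^ (2*α) - |x i - x k| ^ (2*α))) * KK α := by
  have e : (fun u => QQ b x u * u ^ (2 * α - 1)) = fun u => ∑ i, ∑ k, b i * b k *
      (DD (x i / u) * u ^ (2 * α - 1) + DD (x k / u) * u ^ (2 * α - 1)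
        - DD ((x i - x k) / u) * u ^ (2 * α - 1)) := by
    ext u
    rw [QQ_eq, Finset.sum_mul]
    refine Finset.sum_congr rfl fun i _ => ?_
    rw [Finset.sum_mul]
    refine Finset.sum_congr rfl fun k _ => ?_
    ring
  have hi : ∀ i k, IntegrableOn (fun u => b i * b k *
      (DD (x i / u) * u ^ (2 * α - 1) + DD (x k / u) * u ^ (2 * α - 1)
        - DD ((x i - x k) / u) * u ^ (2 * α - 1))) (Ioi 0) := fun i k =>
    (((DD_int α h0 h1 _).add (DD_int α h0 h1 _)).sub (DD_int α h0 h1 _)).const_mul _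
  rw [e]
  refine ⟨integrable_finsetSum _ fun i _ => integrable_finsetSum _ fun k _ => hi i k, ?_⟩
  rw [integral_finsetSum _ fun i _ => integrable_finsetSum _ fun k _ => hi i k, Finset.sum_mul]
  refine Finset.sum_congr rfl fun i _ => ?_
  rw [integral_finsetSum _ fun k _ => hi i k, Finset.sum_mul]
  refine Finset.sum_congr rfl fun k _ => ?_
  rw [integral_const_mul, integral_sub (f := fun u => DD (x i / u) * u ^ (2 * α - 1) +
    DD (x k / u) * u ^ (2 * α - 1)) ((DD_int α h0 h1 _).add (DD_int α h0 h1 _))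
    (DD_int α h0 h1 _), integral_add (DD_int α h0 h1 _) (DD_int α h0 h1 _),
    DD_scale α h0, DD_scale α h0, DD_scale α h0]
  ring

theorem QQ_lower {n : ℕ} (t r : ℝ) (hrt : r ≤ t) (s a : Fin n → ℝ)
    (hs : ∀ j, r ≤ |s j - t|) (u : ℝ) (hu : 0 < u) (hur : u ≤ r / 2) :
    g0 ≤ QQ (Fin.cons 1 (fun j => - a j) : Fin (n+1) → ℝ) (Fin.cons t s : Fin (n+1) → ℝ) u := by
  rw [← g0_sub (t / u)]
  unfold QQ
  apply integral_mono (tent_sq_int _)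
  · have hc : Continuous (fun z => ∑ i, (Fin.cons 1 (fun j => - a j) : Fin (n+1) → ℝ) i *
        psi ((Fin.cons t s : Fin (n+1) → ℝ) i / u) z) :=
      continuous_finsetSum _ fun i _ => continuous_const.mul (psi_cont _)
    have e : (fun z => (∑ i, (Fin.cons 1 (fun j => - a j) : Fin (n+1) → ℝ) i *
        psi ((Fin.cons t s : Fin (n+1) → ℝ) i / u) z) ^ 2) = fun z => ∑ i, ∑ k,
        (Fin.cons 1 (fun j => - a j) : Fin (n+1) → ℝ) i *
        (Fin.cons 1 (fun j => - a j) : Fin (n+1) → ℝ) k *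
        (psi ((Fin.cons t s : Fin (n+1) → ℝ) i / u) z *
          psi ((Fin.cons t s : Fin (n+1) → ℝ) k / u) z) := by
      ext z
      rw [sq, Finset.sum_mul_sum]
      refine Finset.sum_congr rfl fun i _ => Finset.sum_congr rfl fun k _ => ?_
      ring
    rw [e]
    exact integrable_finsetSum _ fun i _ => integrable_finsetSum _ fun k _ =>
      (psi_mul_int _ _).const_mul _
  · intro z
    simp only [Fin.sum_univ_succ, Fin.cons_zero, Fin.cons_succ]
    rcases le_or_gt 1 |z - t / u| with h | h
    · rw [tent_zero h]
      simpa using sq_nonneg _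
    · have hfar : ∀ y : ℝ, r ≤ |y - t| → tent (z - y / u) = 0 := by
        intro y hy
        apply tent_zero
        have h2 : 2 ≤ |y / u - t / u| := by
          rw [← sub_div, abs_div, abs_of_pos hu, le_div_iff₀ hu]
          linarith
        have h3 : |y / u - t / u| ≤ |z - t / u| + |z - y / u| := by
          rw [show y / u - t / u = (z - t / u) - (z - y / u) by ring]
          exact abs_sub _ _
        linarith
      have hz : tent z = 0 := by
        have := hfar 0 (by rw [zero_sub, abs_neg]; exact hrt.trans (le_abs_self t))
        simpa using this
      have : ∀ j, psi (s j / u) z = 0 := fun j => by simp [psi, hz, hfar _ (hs j)]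
      simp only [this]
      simp [psi, hz]

theorem form_lower (α : ℝ) (h0 : 0 < α) (h1 : α < 1) {n : ℕ} (t r : ℝ) (hr : 0 < r) (hrt : r ≤ t)
    (s a : Fin n → ℝ) (hs : ∀ j, r ≤ |s j - t|) (b x : Fin (n+1) → ℝ)
    (hb : b = Fin.cons 1 (fun j => - a j)) (hx : x = Fin.cons t s) :
    g0 * ((r / 2) ^ (2 * α) / (2 * α)) ≤
      (∑ i, ∑ k, b i * b k * (|x i| ^ (2*α) + |x k| ^ (2*α) - |x i - x k| ^ (2*α))) * KK α := by
  obtain ⟨hi, he⟩ := QQ_int α h0 h1 b x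
  rw [← he]
  have hr2 : 0 ≤ r / 2 := by linarith
  have hint : IntervalIntegrable (fun u : ℝ => u ^ (2 * α - 1)) volume 0 (r / 2) :=
    intervalIntegral.intervalIntegrable_rpow' (by linarith)
  calc g0 * ((r / 2) ^ (2 * α) / (2 * α)) = ∫ u in Ioc 0 (r/2), g0 * u ^ (2 * α - 1) := by
        rw [integral_const_mul, ← intervalIntegral.integral_of_le hr2,
          integral_rpow (Or.inl (by linarith)), sub_add_cancel, Real.zero_rpow (by linarith),
          sub_zero]
    _ ≤ ∫ u in Ioc 0 (r/2), QQ b x u * u ^ (2 * α - 1) := by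
        apply setIntegral_mono_on
        · exact ((intervalIntegrable_iff_integrableOn_Ioc_of_le hr2).mp hint).const_mul _
        · exact hi.mono_set Ioc_subset_Ioi_self
        · exact measurableSet_Ioc
        · intro u hu
          apply mul_le_mul_of_nonneg_right _ (Real.rpow_nonneg hu.1.le _)
          rw [hb, hx]
          exact QQ_lower t r hrt s a hs u hu.1 hu.2
    _ ≤ _ := by
        apply setIntegral_mono_set hi
        · filter_upwards [ae_restrict_mem measurableSet_Ioi] with u hu
          exact mul_nonneg (integral_nonneg fun z => sq_nonneg _)
            (Real.rpow_nonneg (le_of_lt hu) _)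
        · exact Ioc_subset_Ioi_self.eventuallyLE

section prob
variable {Ω : Type*} [MeasurableSpace Ω] {P : Measure Ω} {H : ℝ} {B : ℝ → Ω → ℝ}

theorem fbm_memLp (hB : IsFBMReal P H B) (t : ℝ) : MemLp (B t) 2 P := by
  obtain ⟨v, hv⟩ := hB.gaussian 1 (fun _ => t) (fun _ => 1)
  simp only [Finset.univ_unique, one_mul, Finset.sum_singleton] at hv
  have h := ProbabilityTheory.memLp_id_gaussianReal (μ := 0) (v := v) 2
  rw [← hv, memLp_map_measure_iff aestronglyMeasurable_id (hB.meas t).aemeasurable] at h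
  exact_mod_cast h

theorem fbm_mean (hB : IsFBMReal P H B) (t : ℝ) : ∫ ω, B t ω ∂P = 0 := by
  obtain ⟨v, hv⟩ := hB.gaussian 1 (fun _ => t) (fun _ => 1)
  simp only [Finset.univ_unique, one_mul, Finset.sum_singleton] at hv
  have h := ProbabilityTheory.integral_id_gaussianReal (μ := 0) (v := v)
  rw [← hv, integral_map (hB.meas t).aemeasurable (by fun_prop)] at h
  exact h

theorem fbm_comb (hB : IsFBMReal P H B) {m : ℕ} (b x : Fin m → ℝ) :
    ∫ ω, (∑ i, b i * B (x i) ω) ^ 2 ∂P =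
      (∑ i, ∑ k, b i * b k * (|x i| ^ (2*H) + |x k| ^ (2*H) - |x i - x k| ^ (2*H))) / 2 := by
  have e : ∀ ω, (∑ i, b i * B (x i) ω) ^ 2 =
      ∑ i, ∑ k, b i * b k * (B (x i) ω * B (x k) ω) := by
    intro z
    rw [sq, Finset.sum_mul_sum]
    refine Finset.sum_congr rfl fun i _ => Finset.sum_congr rfl fun k _ => ?_
    ring
  have hi : ∀ i k, Integrable (fun ω => B (x i) ω * B (x k) ω) P := fun i k =>
    (fbm_memLp hB (x i)).integrable_mul (fbm_memLp hB (x k))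
  simp_rw [e]
  rw [integral_finsetSum _ fun i _ => integrable_finsetSum _ fun k _ => (hi i k).const_mul _,
    Finset.sum_div]
  refine Finset.sum_congr rfl fun i _ => ?_
  rw [integral_finsetSum _ fun k _ => (hi i k).const_mul _, Finset.sum_div]
  refine Finset.sum_congr rfl fun k _ => ?_
  rw [integral_const_mul, hB.cov]
  ring

theorem comb_memLp (hB : IsFBMReal P H B) {n : ℕ} (t : ℝ) (s a : Fin n → ℝ) :
    MemLp (fun ω => B t ω - ∑ j, a j * B (s j) ω) 2 P :=
  (fbm_memLp hB t).sub (memLp_finsetSum _ fun j _ => (fbm_memLp hB (s j)).const_mul (a j))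

theorem comb_mean [IsProbabilityMeasure P] (hB : IsFBMReal P H B) {n : ℕ} (t : ℝ)
    (s a : Fin n → ℝ) : ∫ ω, (B t ω - ∑ j, a j * B (s j) ω) ∂P = 0 := by
  have hi : ∀ t, Integrable (B t) P := fun t => (fbm_memLp hB t).integrable (by norm_num)
  rw [integral_sub (hi t) (integrable_finsetSum _ fun j _ => (hi _).const_mul _),
    integral_finsetSum _ fun j _ => (hi _).const_mul _]
  simp [integral_const_mul, fbm_mean hB]

end prob

theorem prod_lower {Ω₁ Ω₂ : Type*} [MeasurableSpace Ω₁] [MeasurableSpace Ω₂]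
    (P₁ : Measure Ω₁) (P₂ : Measure Ω₂)
    [IsProbabilityMeasure P₁] [IsProbabilityMeasure P₂] (X : Ω₁ → ℝ) (Y : Ω₂ → ℝ)
    (hX : MemLp X 2 P₁) (hY : MemLp Y 2 P₂) (hX0 : ∫ ω, X ω ∂P₁ = 0) :
    ∫ ω, Y ω ^ 2 ∂P₂ ≤ ∫ ω : Ω₁ × Ω₂, (X ω.1 + Y ω.2) ^ 2 ∂(P₁.prod P₂) := by
  have h1 : Integrable (fun ω : Ω₁ × Ω₂ => X ω.1 ^ 2) (P₁.prod P₂) :=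
    hX.integrable_sq.comp_fst P₂
  have h2 : Integrable (fun ω : Ω₁ × Ω₂ => Y ω.2 ^ 2) (P₁.prod P₂) :=
    hY.integrable_sq.comp_snd P₁
  have h3 : Integrable (fun ω : Ω₁ × Ω₂ => X ω.1 * Y ω.2) (P₁.prod P₂) :=
    (hX.integrable (by norm_num)).mul_prod (hY.integrable (by norm_num))
  have e : ∫ ω : Ω₁ × Ω₂, (X ω.1 + Y ω.2) ^ 2 ∂(P₁.prod P₂) =
      (∫ ω : Ω₁ × Ω₂, X ω.1 ^ 2 ∂(P₁.prod P₂)) + (∫ ω : Ω₁ × Ω₂, Y ω.2 ^ 2 ∂(P₁.prod P₂))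
        + 2 * ∫ ω : Ω₁ × Ω₂, X ω.1 * Y ω.2 ∂(P₁.prod P₂) := by
    rw [← integral_const_mul, ← integral_add h1 h2,
      ← integral_add (f := fun ω : Ω₁ × Ω₂ => X ω.1 ^ 2 + Y ω.2 ^ 2) (h1.add h2) (h3.const_mul 2)]
    congr 1
    ext ω
    ring
  rw [e, integral_prod_mul, hX0, integral_fun_snd (fun ω => Y ω ^ 2)]
  have : 0 ≤ ∫ ω : Ω₁ × Ω₂, X ω.1 ^ 2 ∂(P₁.prod P₂) := integral_nonneg fun _ => sq_nonneg _
  simp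
  linarith

/-- One-sided strong local nondeterminism of `Z₀ = B₀ᴴ + B₀^{α'}` (independent fractional
Brownian motions of Hurst indices `H ≥ α'` on a product probability space): for a closed
interval `I = [c,e] ⊂ (0,1]` there is `C > 0` (depending only on `α'`, `H`, `I`) such that
for every `t ∈ I` and every `0 < r ≤ t`, the squared `L²`-distance of `Z₀(t)` from the
closed linear span of `{Z₀(s) : s ∈ I, |s−t| ≥ r}` is at least `C r^{2α'}`; equivalently,
every finite linear combination `Σ_j a_j Z₀(s_j)` with `s_j ∈ I`, `|s_j − t| ≥ r`,
satisfies `E[(Z₀(t) − Σ_j a_j Z₀(s_j))²] ≥ C r^{2α'}`. -/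
theorem slnd_mixed_fbm_span {Ω₁ Ω₂ : Type*} [MeasurableSpace Ω₁] [MeasurableSpace Ω₂]
    (P₁ : Measure Ω₁) (P₂ : Measure Ω₂)
    [IsProbabilityMeasure P₁] [IsProbabilityMeasure P₂]
    (H α' : ℝ) (hα' : 0 < α') (hα'H : α' ≤ H) (hH : H < 1)
    (B₁ : ℝ → Ω₁ → ℝ) (B₂ : ℝ → Ω₂ → ℝ)
    (hB₁ : IsFBMReal P₁ H B₁) (hB₂ : IsFBMReal P₂ α' B₂)
    (c e : ℝ) (hc : 0 < c) (hce : c ≤ e) (he : e ≤ 1) :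
    ∃ C : ℝ, 0 < C ∧ ∀ t ∈ Set.Icc c e, ∀ r : ℝ, 0 < r → r ≤ t →
      ∀ (n : ℕ) (s : Fin n → ℝ), (∀ j, s j ∈ Set.Icc c e ∧ r ≤ |s j - t|) →
      ∀ a : Fin n → ℝ,
        C * r ^ (2 * α') ≤
          ∫ ω : Ω₁ × Ω₂,
            ((B₁ t ω.1 + B₂ t ω.2) - ∑ j, a j * (B₁ (s j) ω.1 + B₂ (s j) ω.2)) ^ 2
            ∂(P₁.prod P₂) := by
  have hα1 : α' < 1 := lt_of_le_of_lt hα'H hH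
  have hK : 0 < |KK α'| + 1 := by positivity
  refine ⟨g0 * ((1 / 2) ^ (2 * α') / (2 * α')) / (2 * (|KK α'| + 1)), ?_, ?_⟩
  · have := g0_pos
    positivity
  intro t ht r hr hrt n s hs a
  have h1 := form_lower α' hα' hα1 t r hr hrt s a (fun j => (hs j).2) _ _ rfl rfl
  have h2 := fbm_comb hB₂ (Fin.cons 1 (fun j => - a j) : Fin (n+1) → ℝ)
    (Fin.cons t s : Fin (n+1) → ℝ)
  have h3 := prod_lower P₁ P₂ _ _ (comb_memLp hB₁ t s a) (comb_memLp hB₂ t s a)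
    (comb_mean hB₁ t s a)
  have e2 : ∀ ω, ∑ i, (Fin.cons 1 (fun j => - a j) : Fin (n+1) → ℝ) i *
      B₂ ((Fin.cons t s : Fin (n+1) → ℝ) i) ω = B₂ t ω - ∑ j, a j * B₂ (s j) ω := by
    intro ω
    simp [Fin.sum_univ_succ, sub_eq_add_neg]
  simp_rw [e2] at h2
  have e3 : ∀ ω : Ω₁ × Ω₂, (B₁ t ω.1 + B₂ t ω.2) - ∑ j, a j * (B₁ (s j) ω.1 + B₂ (s j) ω.2) =
      (B₁ t ω.1 - ∑ j, a j * B₁ (s j) ω.1) + (B₂ t ω.2 - ∑ j, a j * B₂ (s j) ω.2) := by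
    intro ω
    simp only [mul_add, Finset.sum_add_distrib]
    ring
  simp_rw [e3]
  refine le_trans ?_ h3
  have hE : 0 ≤ ∫ ω, (B₂ t ω - ∑ j, a j * B₂ (s j) ω) ^ 2 ∂P₂ :=
    integral_nonneg fun _ => sq_nonneg _
  rw [_root_.eq_div_iff two_ne_zero] at h2
  rw [← h2] at h1
  set E := ∫ ω, (B₂ t ω - ∑ j, a j * B₂ (s j) ω) ^ 2 ∂P₂
  have h4 : E * 2 * KK α' ≤ E * 2 * (|KK α'| + 1) :=
    mul_le_mul_of_nonneg_left (by linarith [le_abs_self (KK α')]) (by linarith)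
  rw [div_mul_eq_mul_div, _root_.div_le_iff₀ (by positivity)]
  calc _ = g0 * ((r / 2) ^ (2 * α') / (2 * α')) := by
        rw [show r / 2 = 1 / 2 * r by ring, Real.mul_rpow (by norm_num) hr.le]
        ring
    _ ≤ _ := by linarith
end
end
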